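/- Theorem 1 (two-factor weighted sum formula with parameters): For nonnegative integers k, ℓ and real parameters μ_1, μ_2, ξ_1, ξ_2, the sum over a_1+a_2=k, b_1+b_2=ℓ of μ_1^{a_1} μ_2^{a_2} ξ_1^{b_1} ξ_2^{b_2} ζ(a_1+b_1+2) ζ(a_2+b_2+2) equals the sum over σ ∈ S_2 of [ ∑_{a_1+a_2=k, b_1+b_2=ℓ} μ_{σ(1)}^{a_1} μ_{σ(2)}^{a_2} ξ_{σ(1)}^{b_1} ξ_{σ(2)}^{b_2} ∑_{|α|=a_1+b_1+1, |β|=a_2+b_2+1} ζ(α_0,...,α_{a_1}+1, β_0,...,β_{a_2}+1) + ∑_{a_1+a_2+a_3=k, b_1+b_2+b_3=ℓ} μ_{σ(1)}^{a_1} ξ_{σ(1)}^{b_1} (μ_{σ(1)}+μ_{σ(2)})^{a_2} (ξ_{σ(1)}+ξ_{σ(2)})^{b_2} (μ_{σ(1)}^{a_3} ξ_{σ(1)}^{b_3} + μ_{σ(2)}^{a_3} ξ_{σ(2)}^{b_3}) ∑_{|α|=a_1+b_1+1, |β|=a_2+b_2+1, |γ|=a_3+b_3+1} ζ(α_0,...,α_{a_1},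 β_0,...,β_{a_2}+γ_0, γ_1,...,γ_{a_3}+1) ]. -/

import Mathlib

open Finset

/-- Multiple zeta value `ζ(α₀,…,α_{n-1}) = ∑_{0<ℓ₀<⋯<ℓ_{n-1}} ∏ ℓᵢ^{-αᵢ}`. -/
noncomputable def mzv {n : ℕ} (α : Fin n → ℕ) : ℝ :=
  ∑' ℓ : {ℓ : Fin n → ℕ // StrictMono ℓ ∧ ∀ i, 0 < ℓ i},
    ∏ i, ((ℓ.1 i : ℝ) ^ (α i))⁻¹

/-- Compositions of `m` into `n` positive parts. -/
def Comp (n m : ℕ) : Type := {v : Fin n → ℕ // (∀ i, 0 < v i) ∧ ∑ i, v i = m}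

/-- Increase the last entry of a tuple by one. -/
def incLast {n : ℕ} (v : Fin n → ℕ) : Fin n → ℕ :=
  fun i => if (i : ℕ) = n - 1 then v i + 1 else v i

/-- `∑ ζ(α₀,…,α_{a₁}+1, β₀,…,β_{a₂}+1)` over compositions `|α| = a₁+b₁+1`,
`|β| = a₂+b₂+1`. -/
noncomputable def S2 (a₁ b₁ a₂ b₂ : ℕ) : ℝ :=
  ∑' (α : Comp (a₁ + 1) (a₁ + b₁ + 1)) (β : Comp (a₂ + 1) (a₂ + b₂ + 1)),
    mzv (Fin.append (incLast α.1) (incLast β.1))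

/-- `∑ ζ(α₀,…,α_{a₁}, β₀,…,β_{a₂}+γ₀, γ₁,…,γ_{a₃}+1)` over compositions
`|α| = a₁+b₁+1`, `|β| = a₂+b₂+1`, `|γ| = a₃+b₃+1`. -/
noncomputable def S3 (a₁ b₁ a₂ b₂ a₃ b₃ : ℕ) : ℝ :=
  ∑' (α : Comp (a₁ + 1) (a₁ + b₁ + 1)) (β : Comp (a₂ + 1) (a₂ + b₂ + 1))
     (γ : Comp (a₃ + 1) (a₃ + b₃ + 1)),
    mzv (incLast (Fin.append α.1 (Fin.append
      (Function.update β.1 (Fin.last a₂) (β.1 (Fin.last a₂) + γ.1 0))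
      (Fin.tail γ.1))))


abbrev Sq := ℕ → ℝ
abbrev Op := Module.End ℝ Sq

noncomputable def I0 : Op where
  toFun g := fun m => g m / m
  map_add' f g := by ext m; simp [add_div]
  map_smul' c g := by ext m; simp [mul_div_assoc]

/-- divide partial sums by `m ^ s` -/
noncomputable def Jop (s : ℕ) : Op where
  toFun g := fun m => (∑ j ∈ range m, g j) / (m : ℝ) ^ s
  map_add' f g := by ext m; simp [add_div, Finset.sum_add_distrib]
  map_smul' c g := by ext m; simp [mul_div_assoc, ← Finset.mul_sum]

noncomputable def I1 : Op := Jop 1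

theorem I0_apply (g : Sq) (m : ℕ) : I0 g m = g m / m := rfl
theorem Jop_apply (s : ℕ) (g : Sq) (m : ℕ) :
    Jop s g m = (∑ j ∈ range m, g j) / (m : ℝ) ^ s := rfl
theorem I1_apply (g : Sq) (m : ℕ) : I1 g m = (∑ j ∈ range m, g j) / (m : ℝ) := by
  simp [I1, Jop_apply]

theorem Jop_succ (s : ℕ) : Jop (s + 1) = I0 * Jop s := by
  ext g m
  simp only [Module.End.mul_apply, I0_apply, Jop_apply, pow_succ, div_div]

theorem Jop_add (s t : ℕ) : Jop (s + t) = I0 ^ t * Jop s := by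
  induction t with
  | zero => simp
  | succ t ih => rw [← add_assoc, Jop_succ, ih, pow_succ', mul_assoc]

theorem Jop_succ' (s : ℕ) : Jop (s + 1) = I0 ^ s * I1 := by
  rw [add_comm, Jop_add, I1]

noncomputable def Wop : ℕ → ℕ → Op
  | 0, b => I0 ^ b
  | a + 1, b => ∑ p ∈ antidiagonal b, Wop a p.2 * (I1 * I0 ^ p.1)

theorem Wop_succ (a b : ℕ) :
    Wop (a + 1) b = ∑ p ∈ antidiagonal b, Wop a p.2 * (I1 * I0 ^ p.1) := by
  rw [Wop]

theorem Wop_zero (b : ℕ) : Wop 0 b = I0 ^ b := by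
  rw [Wop]

theorem Wop_zero_succ (b : ℕ) : Wop 0 (b + 1) = I0 * Wop 0 b := by
  simp [Wop, pow_succ']

theorem Wop_succ_zero (a : ℕ) : Wop (a + 1) 0 = I1 * Wop a 0 := by
  induction a with
  | zero => simp [Wop]
  | succ a ih =>
    rw [Wop_succ]
    simp only [Finset.Nat.antidiagonal_zero, sum_singleton, pow_zero, mul_one]
    conv_rhs => rw [Wop_succ]
    rw [ih]
    simp [mul_assoc]

theorem Wop_succ_succ (a b : ℕ) :
    Wop (a + 1) (b + 1) = I1 * Wop a (b + 1) + I0 * Wop (a + 1) b := by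
  induction a generalizing b with
  | zero =>
    rw [Wop_succ, Wop_succ, Finset.Nat.sum_antidiagonal_succ']
    simp only [Wop_zero, pow_zero, one_mul, pow_succ', Finset.mul_sum, mul_assoc]
  | succ a ih =>
    rw [Wop_succ (a + 1) (b + 1), Finset.Nat.sum_antidiagonal_succ']
    simp only [ih, Wop_succ_zero]
    rw [← ih, Wop_succ a (b + 1), Wop_succ (a + 1) b, Finset.Nat.sum_antidiagonal_succ']
    simp only [Finset.mul_sum, mul_assoc, add_mul, Finset.sum_add_distrib, mul_add]
    abel

noncomputable def dl : Sq := fun m => if m = 0 then 1 else 0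

abbrev OO := PowerSeries (PowerSeries Op)
abbrev RR := PowerSeries (PowerSeries ℝ)
abbrev AA := PowerSeries RR

noncomputable def Psi (P : OO) : AA :=
  PowerSeries.mk fun m => PowerSeries.mk fun l => PowerSeries.mk fun k =>
    (PowerSeries.coeff k (PowerSeries.coeff l P)) dl m

noncomputable def cc (T : Op) : OO := PowerSeries.C (PowerSeries.C T)

noncomputable def Wg (μ ξ : ℝ) : OO :=
  PowerSeries.mk fun l => PowerSeries.mk fun k => (μ ^ k * ξ ^ l) • Wop k l

theorem Wg_rec (μ ξ : ℝ) : Wg μ ξ = 1 +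
    PowerSeries.C PowerSeries.X * (cc (μ • I1) * Wg μ ξ) +
    PowerSeries.X * (cc (ξ • I0) * Wg μ ξ) := by
  ext l k : 2
  rcases l with _ | l <;> rcases k with _ | k <;>
    simp [Wg, cc, PowerSeries.coeff_one, PowerSeries.coeff_succ_X_mul]
  · simp [Wop]
  · rw [Wop_succ_zero, smul_smul]; ring_nf
  · rw [Wop_zero_succ, smul_smul]; ring_nf
  · rw [Wop_succ_succ, smul_add, smul_smul, smul_smul]; congr 2 <;> ring

noncomputable def om : AA := PowerSeries.mk fun m => if m = 0 then 0 else 1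

noncomputable def th (f : AA) : AA := PowerSeries.X * PowerSeries.derivative RR f

theorem coeff_th (f : AA) (m : ℕ) :
    PowerSeries.coeff m (th f) = (m : RR) * PowerSeries.coeff m f := by
  rcases m with _ | m
  · simp [th]
  · simp [th, PowerSeries.coeff_succ_X_mul, PowerSeries.coeff_derivative, mul_comm]

theorem coeff_om_mul (f : AA) (m : ℕ) :
    PowerSeries.coeff m (om * f) = ∑ j ∈ range m, PowerSeries.coeff j f := by
  rw [mul_comm, PowerSeries.coeff_mul, Finset.Nat.sum_antidiagonal_eq_sum_range_succ_mk,
    Finset.sum_range_succ]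
  simp only [om, PowerSeries.coeff_mk]
  simp only [tsub_self, if_true, mul_zero, add_zero]
  apply Finset.sum_congr rfl
  intro j hj
  have := Finset.mem_range.1 hj
  rw [if_neg (by omega), mul_one]

theorem th_add (f g : AA) : th (f + g) = th f + th g := by simp [th, mul_add]
theorem th_mul (f g : AA) : th (f * g) = th f * g + f * th g := by
  simp [th, Derivation.leibniz]; ring

theorem Psi_add (P Q : OO) : Psi (P + Q) = Psi P + Psi Q := by
  ext m l k; simp [Psi]

theorem coeff_Psi (P : OO) (m l k : ℕ) :
    PowerSeries.coeff k (PowerSeries.coeff l (PowerSeries.coeff m (Psi P))) =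
    (PowerSeries.coeff k (PowerSeries.coeff l P)) dl m := by simp [Psi]

theorem Psi_CX_mul (P : OO) : Psi (PowerSeries.C PowerSeries.X * P) =
    PowerSeries.C (PowerSeries.C PowerSeries.X) * Psi P := by
  ext m l k
  rcases k with _ | k <;>
  simp [coeff_Psi, PowerSeries.coeff_succ_X_mul, PowerSeries.coeff_zero_X_mul]

theorem Psi_X_mul (P : OO) : Psi (PowerSeries.X * P) =
    PowerSeries.C (PowerSeries.X) * Psi P := by
  ext m l k
  rcases l with _ | l
  · rw [coeff_Psi, PowerSeries.coeff_zero_X_mul, PowerSeries.coeff_C_mul,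
      PowerSeries.coeff_zero_X_mul]
    simp
  · simp [coeff_Psi, PowerSeries.coeff_succ_X_mul]

theorem natCast_RR (m : ℕ) : (m : RR) = PowerSeries.C (PowerSeries.C (m : ℝ)) := by simp

theorem th_Psi_I0 (μ : ℝ) (P : OO) (hP : PowerSeries.coeff 0 (Psi P) = 0) :
    th (Psi (cc (μ • I0) * P)) = PowerSeries.C (PowerSeries.C (PowerSeries.C μ)) * Psi P := by
  ext m l k
  rcases m with _ | m
  · rw [PowerSeries.coeff_C_mul, hP]; simp [coeff_th]
  · rw [coeff_th, natCast_RR]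
    simp only [PowerSeries.coeff_C_mul, coeff_Psi, cc]
    simp only [Module.End.mul_apply, LinearMap.smul_apply, Pi.smul_apply, I0_apply, smul_eq_mul]
    field_simp

theorem th_Psi_I1 (μ : ℝ) (P : OO) :
    th (Psi (cc (μ • I1) * P)) =
      PowerSeries.C (PowerSeries.C (PowerSeries.C μ)) * (om * Psi P) := by
  ext m l k
  rcases m with _ | m
  · simp [coeff_th, coeff_om_mul]
  · rw [coeff_th, natCast_RR]
    simp only [PowerSeries.coeff_C_mul, coeff_om_mul, map_sum, coeff_Psi, cc]
    simp only [Module.End.mul_apply, LinearMap.smul_apply, Pi.smul_apply, I1_apply, smul_eq_mul]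
    field_simp

theorem Psi_I0_zero (μ : ℝ) (P : OO) : PowerSeries.coeff 0 (Psi (cc (μ • I0) * P)) = 0 := by
  ext l k
  rw [coeff_Psi]; simp [cc, I0_apply]
theorem Psi_I1_zero (μ : ℝ) (P : OO) : PowerSeries.coeff 0 (Psi (cc (μ • I1) * P)) = 0 := by
  ext l k
  rw [coeff_Psi]; simp [cc, I1_apply]

theorem Psi_W_zero (μ ξ : ℝ) (P : OO) (hP : PowerSeries.coeff 0 (Psi P) = 0) :
    PowerSeries.coeff 0 (Psi (Wg μ ξ * P)) = 0 := by
  rw [Wg_rec, add_mul, add_mul, one_mul, mul_assoc, mul_assoc, mul_assoc, mul_assoc,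
    Psi_add, Psi_add, Psi_CX_mul, Psi_X_mul]
  simp only [map_add, PowerSeries.coeff_C_mul]
  rw [Psi_I0_zero, Psi_I1_zero, hP]; simp

noncomputable def cf (μ ξ : ℝ) : AA :=
  PowerSeries.C (PowerSeries.C (PowerSeries.C μ * PowerSeries.X)) * om +
  PowerSeries.C (PowerSeries.C (PowerSeries.C ξ) * PowerSeries.X)

theorem th_C_mul (r : RR) (f : AA) : th (PowerSeries.C r * f) = PowerSeries.C r * th f := by
  ext1 m
  simp only [coeff_th, PowerSeries.coeff_C_mul]; ring

theorem th_Psi_W (μ ξ : ℝ) (P : OO) (hP : PowerSeries.coeff 0 (Psi P) = 0) :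
    th (Psi (Wg μ ξ * P)) = cf μ ξ * Psi (Wg μ ξ * P) + th (Psi P) := by
  have hz := Psi_W_zero μ ξ P hP
  conv_lhs => rw [Wg_rec]
  rw [add_mul, add_mul, one_mul, mul_assoc, mul_assoc, mul_assoc, mul_assoc,
    Psi_add, Psi_add, Psi_CX_mul, Psi_X_mul, th_add, th_add, th_C_mul, th_C_mul,
    th_Psi_I0 _ _ hz, th_Psi_I1, cf]
  simp only [map_mul]
  ring

theorem th_unique (μ ξ : ℝ) (f : AA) (h0 : PowerSeries.coeff 0 f = 0)
    (h : th f = cf μ ξ * f) : f = 0 := by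
  ext1 m
  induction m using Nat.strong_induction_on with
  | _ m ih =>
  rcases Nat.eq_zero_or_pos m with rfl | hm
  · simpa using h0
  have h1 := congrArg (PowerSeries.coeff m) h
  rw [coeff_th, cf, add_mul, mul_assoc, map_add, PowerSeries.coeff_C_mul, PowerSeries.coeff_C_mul,
    coeff_om_mul, Finset.sum_eq_zero (fun j hj => by simpa using ih j (Finset.mem_range.1 hj)),
    mul_zero, zero_add, ← sub_eq_zero, ← sub_mul] at h1
  rcases mul_eq_zero.1 h1 with h2 | h2
  · exfalso
    have h3 := congrArg (fun r : RR => PowerSeries.coeff 0 (PowerSeries.coeff 0 r)) h2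
    rw [natCast_RR] at h3
    simp at h3
    omega
  · simpa using h2

theorem th_unique' (μ ξ : ℝ) (f g h : AA) (f0 : PowerSeries.coeff 0 f = 0)
    (g0 : PowerSeries.coeff 0 g = 0) (hf : th f = cf μ ξ * f + h)
    (hg : th g = cf μ ξ * g + h) : f = g := by
  rw [← sub_eq_zero]
  apply th_unique μ ξ
  · rw [map_sub, f0, g0, sub_zero]
  · have : th (f - g) + th g = th f := by rw [← th_add, sub_add_cancel]
    rw [eq_sub_of_add_eq this, hf, hg]; ring

theorem cf_add (μ ξ μ' ξ' : ℝ) : cf (μ + μ') (ξ + ξ') = cf μ ξ + cf μ' ξ' := by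
  simp only [cf, map_add, add_mul]; ring

theorem cf_zero : cf 0 0 = 0 := by simp [cf]

noncomputable def Dg (μ ξ : ℝ) : OO := Wg μ ξ * cc I1
noncomputable def Eg (μ ξ : ℝ) : OO := cc I0 * Dg μ ξ
noncomputable def P2 (μ ξ μ' ξ' : ℝ) : OO := cc I0 * (Wg μ ξ * (cc I1 * Eg μ' ξ'))
noncomputable def Q3 (μ ξ μ' ξ' : ℝ) : OO := Wg μ ξ * (cc I1 * Dg μ' ξ')
noncomputable def P3 (μ ξ μ' ξ' μ'' ξ'' : ℝ) : OO :=
  cc I0 * (Wg μ ξ * (cc I0 * Q3 μ' ξ' μ'' ξ''))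

theorem I0z (P : OO) : PowerSeries.coeff 0 (Psi (cc I0 * P)) = 0 := by
  simpa using Psi_I0_zero 1 P
theorem I1z (P : OO) : PowerSeries.coeff 0 (Psi (cc I1 * P)) = 0 := by
  simpa using Psi_I1_zero 1 P
theorem thI0 (P : OO) (hP : PowerSeries.coeff 0 (Psi P) = 0) : th (Psi (cc I0 * P)) = Psi P := by
  simpa using th_Psi_I0 1 P hP
theorem thI1 (P : OO) : th (Psi (cc I1 * P)) = om * Psi P := by
  simpa using th_Psi_I1 1 P

theorem Psi_one : Psi 1 = 1 := by
  ext m l k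
  rw [coeff_Psi]
  rcases m with _ | m <;> rcases l with _ | l <;> rcases k with _ | k <;>
    simp [PowerSeries.coeff_one, dl]

theorem Dz (μ ξ : ℝ) : PowerSeries.coeff 0 (Psi (Dg μ ξ)) = 0 :=
  Psi_W_zero _ _ _ (by simpa using I1z 1)
theorem Ez (μ ξ : ℝ) : PowerSeries.coeff 0 (Psi (Eg μ ξ)) = 0 := I0z _
theorem Q3z (μ ξ μ' ξ' : ℝ) : PowerSeries.coeff 0 (Psi (Q3 μ ξ μ' ξ')) = 0 :=
  Psi_W_zero _ _ _ (I1z _)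
theorem thD (μ ξ : ℝ) : th (Psi (Dg μ ξ)) = cf μ ξ * Psi (Dg μ ξ) + om := by
  have h : PowerSeries.coeff 0 (Psi (cc I1)) = 0 := by simpa using I1z 1
  have h2 : th (Psi (cc I1)) = om := by simpa [Psi_one] using thI1 1
  rw [Dg, th_Psi_W _ _ _ h, h2]
theorem thE (μ ξ : ℝ) : th (Psi (Eg μ ξ)) = Psi (Dg μ ξ) := thI0 _ (Dz _ _)
theorem thQ3 (μ ξ μ' ξ' : ℝ) : th (Psi (Q3 μ ξ μ' ξ')) =
    cf μ ξ * Psi (Q3 μ ξ μ' ξ') + om * Psi (Dg μ' ξ') := by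
  rw [Q3, th_Psi_W _ _ _ (I1z _), thI1]

theorem coeff0_mul (f g : AA) (h : PowerSeries.coeff 0 f = 0) :
    PowerSeries.coeff 0 (f * g) = 0 := by
  rw [PowerSeries.coeff_zero_eq_constantCoeff] at *
  simp [h]

theorem DD (μ ξ μ' ξ' : ℝ) : Psi (Dg μ ξ) * Psi (Dg μ' ξ') =
    Psi (Q3 (μ + μ') (ξ + ξ') μ ξ) + Psi (Q3 (μ + μ') (ξ + ξ') μ' ξ') := by
  apply th_unique' (μ + μ') (ξ + ξ') _ _ (om * Psi (Dg μ ξ) + om * Psi (Dg μ' ξ'))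
  · exact coeff0_mul _ _ (Dz _ _)
  · rw [map_add, Q3z, Q3z, add_zero]
  · rw [th_mul, thD, thD, cf_add]; ring
  · rw [th_add, thQ3, thQ3]; ring

theorem DE (μ ξ μ' ξ' : ℝ) : Psi (Dg μ ξ) * Psi (Eg μ' ξ') =
    Psi (Wg μ ξ * (cc I1 * Eg μ' ξ')) +
    Psi (Wg μ ξ * (cc I0 * Q3 (μ + μ') (ξ + ξ') μ ξ)) +
    Psi (Wg μ ξ * (cc I0 * Q3 (μ + μ') (ξ + ξ') μ' ξ')) := by
  apply th_unique' μ ξ _ _ (om * Psi (Eg μ' ξ') + Psi (Dg μ ξ) * Psi (Dg μ' ξ'))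
  · exact coeff0_mul _ _ (Dz _ _)
  · rw [map_add, map_add, Psi_W_zero _ _ _ (I1z _), Psi_W_zero _ _ _ (I0z _),
      Psi_W_zero _ _ _ (I0z _)]; simp
  · rw [th_mul, thD, thE]; ring
  · rw [th_add, th_add, th_Psi_W _ _ _ (I1z _), th_Psi_W _ _ _ (I0z _), th_Psi_W _ _ _ (I0z _),
      thI1, thI0 _ (Q3z _ _ _ _), thI0 _ (Q3z _ _ _ _), DD]; ring

theorem EE (μ ξ μ' ξ' : ℝ) : Psi (Eg μ ξ) * Psi (Eg μ' ξ') =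
    Psi (P2 μ ξ μ' ξ' + P3 μ ξ (μ + μ') (ξ + ξ') μ ξ + P3 μ ξ (μ + μ') (ξ + ξ') μ' ξ' +
      (P2 μ' ξ' μ ξ + P3 μ' ξ' (μ + μ') (ξ + ξ') μ' ξ' + P3 μ' ξ' (μ + μ') (ξ + ξ') μ ξ)) := by
  have key : ∀ μ ξ μ' ξ', th (Psi (P2 μ ξ μ' ξ') + Psi (P3 μ ξ (μ + μ') (ξ + ξ') μ ξ) +
      Psi (P3 μ ξ (μ + μ') (ξ + ξ') μ' ξ')) = Psi (Dg μ ξ) * Psi (Eg μ' ξ') := by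
    intro μ ξ μ' ξ'
    rw [th_add, th_add, P2, P3, P3, thI0, thI0, thI0, DE]
    · exact Psi_W_zero _ _ _ (I0z _)
    · exact Psi_W_zero _ _ _ (I0z _)
    · exact Psi_W_zero _ _ _ (I1z _)
  apply th_unique' 0 0 _ _ (Psi (Dg μ ξ) * Psi (Eg μ' ξ') + Psi (Eg μ ξ) * Psi (Dg μ' ξ'))
  · exact coeff0_mul _ _ (Ez _ _)
  · simp only [Psi_add, map_add, P2, P3, I0z, add_zero]
  · rw [th_mul, thE, thE, cf_zero]; ring
  · have h2 := key μ' ξ' μ ξ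
    rw [add_comm μ' μ, add_comm ξ' ξ] at h2
    simp only [Psi_add]
    rw [th_add, key μ ξ μ' ξ', h2, cf_zero]; ring

theorem coeff_mul_W (P : OO) (T : Op) (μ ξ : ℝ) (k l : ℕ) :
    PowerSeries.coeff k (PowerSeries.coeff l (P * (cc T * Wg μ ξ))) =
    ∑ a ∈ antidiagonal k, ∑ b ∈ antidiagonal l, (μ ^ a.1 * ξ ^ b.1) •
      (PowerSeries.coeff a.2 (PowerSeries.coeff b.2 P) * T * Wop a.1 b.1) := by
  rw [PowerSeries.coeff_mul, map_sum, ← Finset.Nat.sum_antidiagonal_swap, Finset.sum_comm]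
  apply Finset.sum_congr rfl
  intro b _
  rw [PowerSeries.coeff_mul, ← Finset.Nat.sum_antidiagonal_swap]
  apply Finset.sum_congr rfl
  intro a _
  simp [cc, Wg, mul_assoc]

theorem coeff_cc_mul (P : OO) (T : Op) (k l : ℕ) :
    PowerSeries.coeff k (PowerSeries.coeff l (cc T * P)) =
    T * PowerSeries.coeff k (PowerSeries.coeff l P) := by simp [cc]
theorem coeff_mul_cc (P : OO) (T : Op) (k l : ℕ) :
    PowerSeries.coeff k (PowerSeries.coeff l (P * cc T)) =
    PowerSeries.coeff k (PowerSeries.coeff l P) * T := by simp [cc]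
theorem coeff_Wg (μ ξ : ℝ) (k l : ℕ) :
    PowerSeries.coeff k (PowerSeries.coeff l (Wg μ ξ)) = (μ ^ k * ξ ^ l) • Wop k l := by simp [Wg]

noncomputable def eseq (a b : ℕ) : Sq := (I0 * (Wop a b * I1)) dl
noncomputable def s2seq (a₁ b₁ a₂ b₂ : ℕ) : Sq :=
  (I0 * (Wop a₂ b₂ * I1) * (I0 * (Wop a₁ b₁ * I1))) dl
noncomputable def s3seq (a₁ b₁ a₂ b₂ a₃ b₃ : ℕ) : Sq :=
  (I0 * (Wop a₃ b₃ * I0) * (Wop a₂ b₂ * I1) * (Wop a₁ b₁ * I1)) dl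

theorem coeff_Eg (μ ξ : ℝ) (k l m : ℕ) :
    PowerSeries.coeff k (PowerSeries.coeff l (PowerSeries.coeff m (Psi (Eg μ ξ)))) =
    μ ^ k * ξ ^ l * eseq k l m := by
  rw [coeff_Psi, Eg, Dg, coeff_cc_mul, coeff_mul_cc, coeff_Wg]
  simp [eseq]

theorem coeff_P2 (μ ξ μ' ξ' : ℝ) (k l m : ℕ) :
    PowerSeries.coeff k (PowerSeries.coeff l (PowerSeries.coeff m (Psi (P2 μ ξ μ' ξ')))) =
    ∑ a ∈ antidiagonal k, ∑ b ∈ antidiagonal l, 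
    μ' ^ a.1 * μ ^ a.2 * ξ' ^ b.1 * ξ ^ b.2 * s2seq a.1 b.1 a.2 b.2 m := by
  have : P2 μ ξ μ' ξ' = (cc I0 * Wg μ ξ * cc I1) * (cc I0 * Wg μ' ξ') * cc I1 := by
    simp only [P2, Eg, Dg, mul_assoc]
  rw [coeff_Psi, this, coeff_mul_cc, coeff_mul_W]
  simp only [Finset.sum_mul, LinearMap.sum_apply, Finset.sum_apply]
  refine Finset.sum_congr rfl fun a _ => Finset.sum_congr rfl fun b _ => ?_
  rw [coeff_mul_cc, coeff_cc_mul, coeff_Wg, s2seq]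
  simp only [mul_smul_comm, smul_mul_assoc, LinearMap.smul_apply, Pi.smul_apply, smul_eq_mul,
    mul_assoc]
  ring

theorem coeff_P3 (μ ξ μ' ξ' μ'' ξ'' : ℝ) (k l m : ℕ) :
    PowerSeries.coeff k (PowerSeries.coeff l (PowerSeries.coeff m
      (Psi (P3 μ ξ μ' ξ' μ'' ξ'')))) =
    ∑ a ∈ antidiagonal k, ∑ a' ∈ antidiagonal a.2,
        ∑ b ∈ antidiagonal l, ∑ b' ∈ antidiagonal b.2,
      μ'' ^ a.1 * ξ'' ^ b.1 * μ' ^ a'.1 * ξ' ^ b'.1 * (μ ^ a'.2 * ξ ^ b'.2) *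
        s3seq a.1 b.1 a'.1 b'.1 a'.2 b'.2 m := by
  have : P3 μ ξ μ' ξ' μ'' ξ'' =
      ((cc I0 * Wg μ ξ) * (cc I0 * Wg μ' ξ')) * (cc I1 * Wg μ'' ξ'') * cc I1 := by
    simp only [P3, Q3, Dg, mul_assoc]
  rw [coeff_Psi, this, coeff_mul_cc, coeff_mul_W]
  simp only [Finset.sum_mul, LinearMap.sum_apply, Finset.sum_apply]
  refine Finset.sum_congr rfl fun a _ => ?_
  rw [Finset.sum_comm]
  refine Finset.sum_congr rfl fun b _ => ?_
  rw [coeff_mul_W]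
  simp only [Finset.sum_mul, Finset.smul_sum, LinearMap.sum_apply, Finset.sum_apply]
  refine Finset.sum_congr rfl fun a' _ => Finset.sum_congr rfl fun b' _ => ?_
  rw [coeff_cc_mul, coeff_Wg, s3seq]
  simp only [mul_smul_comm, smul_mul_assoc, LinearMap.smul_apply, Pi.smul_apply, smul_eq_mul,
    mul_assoc]


/-! ### Linking with multiple zeta values -/

noncomputable def opL : List ℕ → Op
  | [] => 1
  | s :: L => opL L * Jop s

theorem opL_append (L L' : List ℕ) : opL (L ++ L') = opL L' * opL L := by
  induction L with
  | nil => simp [opL]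
  | cons s L ih => simp [opL, ih, mul_assoc]

theorem opL_incLast {n : ℕ} (hn : 0 < n) (v : Fin n → ℕ) :
    opL (List.ofFn (incLast v)) = I0 * opL (List.ofFn v) := by
  obtain ⟨n, rfl⟩ : ∃ k, n = k + 1 := ⟨n - 1, by omega⟩
  have h1 : ∀ i : Fin n, incLast v i.castSucc = v i.castSucc := by
    intro i
    have := i.2
    simp [incLast]; omega
  rw [List.ofFn_succ', List.ofFn_succ', List.concat_eq_append, List.concat_eq_append,
    opL_append, opL_append]
  simp only [h1, opL, one_mul]
  have : incLast v (Fin.last n) = v (Fin.last n) + 1 := by simp [incLast]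
  rw [this, Jop_succ, mul_assoc]

theorem opL_update {n : ℕ} (v : Fin (n + 1) → ℕ) (t : ℕ) :
    opL (List.ofFn (Function.update v (Fin.last n) (v (Fin.last n) + t))) =
      I0 ^ t * opL (List.ofFn v) := by
  have h1 : ∀ i : Fin n, Function.update v (Fin.last n) (v (Fin.last n) + t) i.castSucc
      = v i.castSucc := by
    intro i
    rw [Function.update_of_ne]
    exact Fin.castSucc_ne_last i
  rw [List.ofFn_succ', List.ofFn_succ', List.concat_eq_append, List.concat_eq_append,
    opL_append, opL_append]
  simp only [h1, opL, one_mul, Function.update_self]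
  rw [Jop_add, mul_assoc]

noncomputable def tup (n N : ℕ) : Finset (Fin n → ℕ) :=
  letI : DecidablePred (fun f : Fin n → ℕ => StrictMono f) := Classical.decPred _
  (Fintype.piFinset fun _ => Ico 1 N).filter StrictMono

theorem mem_tup {n N : ℕ} (f : Fin n → ℕ) :
    f ∈ tup n N ↔ (∀ i, 1 ≤ f i ∧ f i < N) ∧ StrictMono f := by
  simp [tup]

theorem strictMono_snoc {n : ℕ} (f : Fin (n + 1) → ℕ) :
    StrictMono f ↔ StrictMono (Fin.init f) ∧ ∀ i, Fin.init f i < f (Fin.last n) := by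
  constructor
  · intro h
    exact ⟨fun i j hij => h (by simpa using hij), fun i => h (Fin.castSucc_lt_last i)⟩
  · rintro ⟨h1, h2⟩ i j hij
    induction j using Fin.lastCases with
    | last =>
      induction i using Fin.lastCases with
      | last => exact absurd hij (lt_irrefl _)
      | cast i => exact h2 i
    | cast j =>
      induction i using Fin.lastCases with
      | last => exact absurd hij (not_lt.2 (Fin.le_last _))
      | cast i => exact h1 (by simpa using hij)

theorem tup_sum_succ {n N : ℕ} (F : (Fin (n + 1) → ℕ) → ℝ) :
    ∑ f ∈ tup (n + 1) N, F f = ∑ m ∈ Ico 1 N, ∑ g ∈ tup n m, F (Fin.snoc g m) := by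
  rw [Finset.sum_sigma']
  refine Finset.sum_bij' (fun f _ => ⟨f (Fin.last n), Fin.init f⟩)
    (fun p _ => Fin.snoc p.2 p.1) ?_ ?_ ?_ ?_ ?_
  · intro f hf
    rw [mem_tup, strictMono_snoc] at hf
    rw [Finset.mem_sigma, mem_tup, Finset.mem_Ico]
    exact ⟨hf.1 _, fun i => ⟨(hf.1 i.castSucc).1, hf.2.2 i⟩, hf.2.1⟩
  · rintro ⟨m, g⟩ hp
    rw [Finset.mem_sigma, mem_tup, Finset.mem_Ico] at hp
    dsimp only at hp ⊢
    rw [mem_tup, strictMono_snoc]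
    refine ⟨?_, ?_, ?_⟩
    · intro i
      induction i using Fin.lastCases with
      | last => simpa using hp.1
      | cast i => 
        have := hp.2.1 i
        simp only [Fin.snoc_castSucc]; omega
    · simpa using hp.2.2
    · intro i; simpa using (hp.2.1 i).2
  · intro f hf; simp
  · rintro ⟨m, g⟩ hp; simp
  · intro f hf; simp

theorem tup_sum (n : ℕ) (α : Fin n → ℕ) (N : ℕ) (hN : 0 < N) :
    ∑ f ∈ tup n N, ∏ i, ((f i : ℝ) ^ (α i))⁻¹ =
      ∑ j ∈ range N, (opL (List.ofFn α) dl) j := by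
  induction n generalizing N with
  | zero =>
    have : tup 0 N = {Fin.elim0} := by
      ext f
      rw [mem_tup, Finset.mem_singleton]
      constructor
      · intro _; exact Subsingleton.elim _ _
      · intro _; exact ⟨fun i => i.elim0, fun i => i.elim0⟩
    rw [this]
    simp [opL, dl, hN]
  | succ n ih =>
    rw [tup_sum_succ, List.ofFn_succ', List.concat_eq_append, opL_append, Finset.range_eq_Ico,
      Finset.sum_eq_sum_Ico_succ_bot hN]
    simp only [opL, one_mul, Module.End.mul_apply, Jop_apply]
    simp only [range_zero, sum_empty, zero_div, zero_add]
    apply Finset.sum_congr rfl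
    intro m hm
    rw [Finset.mem_Ico] at hm
    rw [← ih _ m (by omega), Finset.sum_div]
    apply Finset.sum_congr rfl
    intro g _
    rw [Fin.prod_univ_castSucc]
    simp [div_eq_mul_inv]

theorem mzv_hasSum {n : ℕ} (α : Fin n → ℕ) (a : ℝ)
    (h : HasSum (opL (List.ofFn α) dl) a) : mzv α = a := by
  set F : {f : Fin n → ℕ // StrictMono f ∧ ∀ i, 0 < f i} → ℝ :=
    fun f => ∏ i, ((f.1 i : ℝ) ^ (α i))⁻¹ with hF
  have hF0 : ∀ f, 0 ≤ F f := fun f => Finset.prod_nonneg fun i _ => by positivity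
  let s : ℕ → Finset {f : Fin n → ℕ // StrictMono f ∧ ∀ i, 0 < f i} := fun N =>
    letI : DecidablePred (fun f : Fin n → ℕ => StrictMono f ∧ ∀ i, 0 < f i) := Classical.decPred _
    (tup n N).subtype _
  have hs : ∀ N, 0 < N → ∑ f ∈ s N, F f = ∑ j ∈ range N, (opL (List.ofFn α) dl) j := by
    intro N hN
    rw [← tup_sum n α N hN]
    refine Finset.sum_bij (fun f _ => f.1) ?_ ?_ ?_ ?_
    · intro f hf; simpa [s] using hf
    · intro f _ g _ h; exact Subtype.ext h
    · intro f hf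
      have hf' := (mem_tup f).1 hf
      exact ⟨⟨f, hf'.2, fun i => (hf'.1 i).1⟩, by simpa [s] using hf, rfl⟩
    · intro f hf; rfl
  have hmem : ∀ f N, f ∈ s N ↔ ∀ i, f.1 i < N := by
    intro f N
    simp only [s, Finset.mem_subtype, mem_tup]
    exact ⟨fun h i => (h.1 i).2, fun h => ⟨fun i => ⟨f.2.2 i, h i⟩, f.2.1⟩⟩
  have hmono : Monotone s := by
    intro N M hNM f hf
    rw [hmem] at hf ⊢
    exact fun i => (hf i).trans_le hNM
  have hcov : ∀ f, ∃ N, f ∈ s N := by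
    intro f
    refine ⟨∑ i, f.1 i + 1, (hmem _ _).2 fun i => Nat.lt_succ_of_le ?_⟩
    exact Finset.single_le_sum (f := f.1) (fun _ _ => Nat.zero_le _) (Finset.mem_univ i)
  have hst : Filter.Tendsto s Filter.atTop Filter.atTop :=
    Filter.tendsto_atTop_finset_of_monotone hmono hcov
  have hlim : Filter.Tendsto (fun N => ∑ f ∈ s N, F f) Filter.atTop (nhds a) := by
    refine h.tendsto_sum_nat.congr' ?_
    filter_upwards [Filter.eventually_gt_atTop 0] with N hN
    exact (hs N hN).symm
  have hmon2 : Monotone (fun N => ∑ f ∈ s N, F f) := fun N M hNM =>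
    Finset.sum_le_sum_of_subset_of_nonneg (hmono hNM) fun f _ _ => hF0 f
  have hsum : Summable F := by
    apply summable_of_sum_le (c := a) hF0
    intro u
    obtain ⟨N, hN⟩ := (hst.eventually (Filter.eventually_ge_atTop u)).exists
    exact (Finset.sum_le_sum_of_subset_of_nonneg hN fun f _ _ => hF0 f).trans
      (hmon2.ge_of_tendsto hlim N)
  exact tendsto_nhds_unique (hsum.hasSum.comp hst) hlim

/-- sequences which are `O(m ^ (-1/2))` -/
def BB : Submodule ℝ Sq where
  carrier := {g | ∃ C, ∀ m : ℕ, |g m| * √(m : ℝ) ≤ C}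
  add_mem' := by
    rintro f g ⟨C, hC⟩ ⟨D, hD⟩
    refine ⟨C + D, fun m => ?_⟩
    calc _ ≤ (|f m| + |g m|) * √(m : ℝ) := by
          gcongr; exact abs_add_le _ _
      _ ≤ _ := by rw [add_mul]; exact add_le_add (hC m) (hD m)
  zero_mem' := ⟨0, by simp⟩
  smul_mem' := by
    rintro c f ⟨C, hC⟩
    refine ⟨|c| * C, fun m => ?_⟩
    simp only [Pi.smul_apply, smul_eq_mul, abs_mul, mul_assoc]
    gcongr
    exact hC m

theorem mem_BB (g : Sq) : g ∈ BB ↔ ∃ C, ∀ m : ℕ, |g m| * √(m : ℝ) ≤ C := Iff.rfl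

theorem dl_mem : dl ∈ BB := (mem_BB _).2 ⟨0, fun m => by
  rcases m with _ | m <;> simp [dl]⟩

theorem I0_mem {g : Sq} (hg : g ∈ BB) : I0 g ∈ BB := by
  obtain ⟨C, hC⟩ := (mem_BB _).1 hg
  refine (mem_BB _).2 ⟨C, fun m => ?_⟩
  rcases Nat.eq_zero_or_pos m with rfl | hm
  · simpa using hC 0
  refine le_trans ?_ (hC m)
  rw [I0_apply, abs_div]
  gcongr
  have : (1 : ℝ) ≤ |(m : ℝ)| := by rw [Nat.abs_cast]; exact_mod_cast hm
  exact div_le_self (abs_nonneg _) this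

theorem sum_le_sqrt {g : Sq} {C : ℝ} (hC : ∀ m : ℕ, |g m| * √(m : ℝ) ≤ C) (m : ℕ) :
    ∑ j ∈ range (m + 1), |g j| ≤ |g 0| + 2 * C * √(m : ℝ) := by
  induction m with
  | zero => simp
  | succ m ih =>
    rw [Finset.sum_range_succ]
    have h1 := hC (m + 1)
    have hC0 : 0 ≤ C := by simpa using hC 0
    have hp : 0 < √((m + 1 : ℕ) : ℝ) := Real.sqrt_pos.2 (by positivity)
    have h2 : |g (m + 1)| ≤ C / √((m + 1 : ℕ) : ℝ) := (le_div_iff₀ hp).2 h1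
    have h3 : C / √((m + 1 : ℕ) : ℝ) ≤ 2 * C * (√((m + 1 : ℕ) : ℝ) - √(m : ℝ)) := by
      rw [div_le_iff₀ hp]
      have e1 := Real.sq_sqrt (show (0 : ℝ) ≤ ((m + 1 : ℕ) : ℝ) by positivity)
      have e2 := Real.sq_sqrt (show (0 : ℝ) ≤ (m : ℝ) by positivity)
      push_cast at *
      nlinarith [sq_nonneg (√((m : ℝ) + 1) - √(m : ℝ))]
    linarith

theorem I1_mem {g : Sq} (hg : g ∈ BB) : I1 g ∈ BB := by
  obtain ⟨C, hC⟩ := (mem_BB _).1 hg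
  refine (mem_BB _).2 ⟨|g 0| + 2 * C, fun m => ?_⟩
  have hC0 : 0 ≤ C := by simpa using hC 0
  rcases m with _ | m
  · simp; positivity
  have hp : 0 < √((m + 1 : ℕ) : ℝ) := Real.sqrt_pos.2 (by positivity)
  have e1 := Real.mul_self_sqrt (show (0 : ℝ) ≤ ((m + 1 : ℕ) : ℝ) by positivity)
  have hge : 1 ≤ √((m + 1 : ℕ) : ℝ) := Real.one_le_sqrt.2 (by push_cast; linarith [m.cast_nonneg (α := ℝ)])
  have hle : √(m : ℝ) ≤ √((m + 1 : ℕ) : ℝ) := Real.sqrt_le_sqrt (by push_cast; linarith)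
  have h1 : |I1 g (m + 1)| ≤ (|g 0| + 2 * C * √(m : ℝ)) / ((m + 1 : ℕ) : ℝ) := by
    rw [I1_apply, abs_div, Nat.abs_cast]
    gcongr
    exact (Finset.abs_sum_le_sum_abs _ _).trans (sum_le_sqrt hC m)
  have h2 : (|g 0| + 2 * C * √(m : ℝ)) ≤ (|g 0| + 2 * C) * √((m + 1 : ℕ) : ℝ) := by
    have := mul_le_mul_of_nonneg_left hge (abs_nonneg (g 0))
    have := mul_le_mul_of_nonneg_left hle hC0
    linarith
  calc _ ≤ ((|g 0| + 2 * C) * √((m + 1 : ℕ) : ℝ)) / ((m + 1 : ℕ) : ℝ) * √((m + 1 : ℕ) : ℝ) := by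
        gcongr; exact h1.trans (by gcongr)
    _ = |g 0| + 2 * C := by
        rw [div_mul_eq_mul_div, mul_assoc, e1, mul_div_assoc, div_self (by positivity), mul_one]

theorem I0pow_mem {g : Sq} (hg : g ∈ BB) (b : ℕ) : (I0 ^ b) g ∈ BB := by
  induction b with
  | zero => simpa using hg
  | succ b ih => rw [pow_succ']; exact I0_mem ih

theorem Wop_mem (a b : ℕ) {g : Sq} (hg : g ∈ BB) : Wop a b g ∈ BB := by
  induction a generalizing b g with
  | zero => rw [Wop_zero]; exact I0pow_mem hg b
  | succ a ih =>
    rw [Wop_succ, LinearMap.sum_apply]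
    exact Submodule.sum_mem _ fun p _ => ih _ (I1_mem (I0pow_mem hg _))

theorem opL_mem {L : List ℕ} (hL : ∀ s ∈ L, 0 < s) {g : Sq} (hg : g ∈ BB) : opL L g ∈ BB := by
  induction L generalizing g with
  | nil => simpa [opL] using hg
  | cons s L ih =>
    rw [opL]
    refine ih (fun s hs => hL s (by simp [hs])) ?_
    obtain ⟨t, rfl⟩ : ∃ t, s = t + 1 := ⟨s - 1, by have := hL s (by simp); omega⟩
    rw [Jop_succ']
    exact I0pow_mem (I1_mem hg) _

theorem I0_summable {g : Sq} (hg : g ∈ BB) : Summable (fun m => |I0 g m|) := by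
  obtain ⟨C, hC⟩ := (mem_BB _).1 hg
  have hs : Summable (fun m : ℕ => C * (1 / (m : ℝ) ^ (3 / 2 : ℝ))) :=
    (Real.summable_one_div_nat_rpow.2 (by norm_num)).mul_left C
  refine Summable.of_nonneg_of_le (fun m => abs_nonneg _) (fun m => ?_) hs
  have hC0 : 0 ≤ C := by
    have := hC 0
    simpa using this
  rcases Nat.eq_zero_or_pos m with rfl | hm
  · simp [I0_apply]
  have hm' : (0 : ℝ) < m := by exact_mod_cast hm
  have : (m : ℝ) ^ (3 / 2 : ℝ) = m * √(m : ℝ) := by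
    rw [Real.sqrt_eq_rpow, show (3 / 2 : ℝ) = 1 + 1 / 2 by norm_num, Real.rpow_add hm',
      Real.rpow_one]
  rw [this, I0_apply, abs_div, Nat.abs_cast, mul_one_div, div_le_div_iff₀ hm' (by positivity)]
  have := mul_le_mul_of_nonneg_left (hC m) hm'.le
  linarith

theorem I0_summable' {g : Sq} (hg : g ∈ BB) : Summable (I0 g) := (I0_summable hg).of_abs

/-! ### Sums over compositions -/

theorem comp_sum (a b : ℕ) (F : (Fin (a + 1) → ℕ) → ℝ) :
    ∑' α : Comp (a + 1) (a + b + 1), F α.1 =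
    ∑ v ∈ Finset.Nat.antidiagonalTuple (a + 1) b, F (fun i => v i + 1) := by
  let e : Comp (a + 1) (a + b + 1) ≃ {v // v ∈ Finset.Nat.antidiagonalTuple (a + 1) b} :=
    { toFun := fun α => ⟨fun i => α.1 i - 1, by
        rw [Finset.Nat.mem_antidiagonalTuple]
        have h := α.2.2
        have h2 : ∑ i, α.1 i = ∑ i, ((α.1 i - 1) + 1) :=
          Finset.sum_congr rfl fun i _ => by have := α.2.1 i; omega
        rw [h2, Finset.sum_add_distrib] at h
        simp at h
        omega⟩
      invFun := fun v => ⟨fun i => v.1 i + 1, fun i => Nat.succ_pos _, by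
        have := Finset.Nat.mem_antidiagonalTuple.1 v.2
        rw [Finset.sum_add_distrib, this]
        simp; omega⟩
      left_inv := fun α => Subtype.ext (funext fun i => by have := α.2.1 i; dsimp only; omega)
      right_inv := fun v => Subtype.ext (funext fun i => by simp) }
  rw [← e.symm.tsum_eq, ← Finset.tsum_subtype]
  rfl

theorem sum_tail (a b : ℕ) :
    ∑ v ∈ Finset.Nat.antidiagonalTuple (a + 1) b,
      opL (List.ofFn (Fin.tail (fun i => v i + 1))) * I0 ^ (v 0) = Wop a b := by
  have key : ∀ a b (F : (Fin (a + 1) → ℕ) → Op), ∑ v ∈ Finset.Nat.antidiagonalTuple (a + 1) b, F v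
      = ∑ p ∈ antidiagonal b, ∑ v ∈ Finset.Nat.antidiagonalTuple a p.2, F (Fin.cons p.1 v) := by
    intro a b F
    rw [Finset.sum_sigma']
    refine Finset.sum_bij' (fun v _ => ⟨(v 0, b - v 0), Fin.tail v⟩)
      (fun p _ => Fin.cons p.1.1 p.2) ?_ ?_ ?_ ?_ ?_
    · intro v hv
      rw [Finset.Nat.mem_antidiagonalTuple, Fin.sum_univ_succ] at hv
      rw [Finset.mem_sigma, Finset.HasAntidiagonal.mem_antidiagonal, Finset.Nat.mem_antidiagonalTuple]
      simp only [Fin.tail]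
      omega
    · rintro ⟨⟨i, j⟩, v⟩ hp
      rw [Finset.mem_sigma, Finset.HasAntidiagonal.mem_antidiagonal, Finset.Nat.mem_antidiagonalTuple] at hp
      rw [Finset.Nat.mem_antidiagonalTuple, Fin.sum_univ_succ]
      simpa [hp.2] using hp.1
    · intro v hv; simp
    · rintro ⟨⟨i, j⟩, v⟩ hp
      rw [Finset.mem_sigma, Finset.HasAntidiagonal.mem_antidiagonal] at hp
      have := hp.1
      simp at this ⊢
      omega
    · intro v hv; simp
  induction a generalizing b with
  | zero =>
    rw [key, Finset.sum_eq_single (b, 0)]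
    · simp [opL, Wop_zero]
    · rintro ⟨i, j⟩ hij hne
      rw [Finset.HasAntidiagonal.mem_antidiagonal] at hij
      have : j ≠ 0 := by rintro rfl; apply hne; simpa using hij
      obtain ⟨j, rfl⟩ : ∃ t, j = t + 1 := ⟨j - 1, by omega⟩
      simp
    · simp
  | succ a ih =>
    rw [key, Wop_succ]
    apply Finset.sum_congr rfl
    rintro ⟨i, j⟩ _
    rw [← ih, Finset.sum_mul]
    apply Finset.sum_congr rfl
    intro v _
    have : (Fin.tail fun x => (Fin.cons i v : Fin (a + 2) → ℕ) x + 1) = fun x => v x + 1 := by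
      ext x; simp [Fin.tail]
    rw [this, List.ofFn_succ, opL, Jop_succ', Fin.cons_zero]
    simp only [mul_assoc]
    rfl

theorem sum_full (a b : ℕ) :
    ∑ v ∈ Finset.Nat.antidiagonalTuple (a + 1) b, opL (List.ofFn (fun i => v i + 1)) =
      Wop a b * I1 := by
  rw [← sum_tail, Finset.sum_mul]
  apply Finset.sum_congr rfl
  intro v _
  rw [List.ofFn_succ, opL, Jop_succ', mul_assoc]
  rfl

theorem ofFn_pos {n : ℕ} {v : Fin n → ℕ} (h : ∀ i, 0 < v i) : ∀ s ∈ List.ofFn v, 0 < s := by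
  intro s hs
  rw [List.mem_ofFn] at hs
  obtain ⟨i, rfl⟩ := hs
  exact h i

theorem s2_hasSum (a₁ b₁ a₂ b₂ : ℕ) : HasSum (s2seq a₁ b₁ a₂ b₂) (S2 a₁ b₁ a₂ b₂) := by
  have h1 : ∀ (v : Fin (a₁ + 1) → ℕ) (w : Fin (a₂ + 1) → ℕ),
      HasSum ((I0 * opL (List.ofFn fun i => w i + 1) * (I0 * opL (List.ofFn fun i => v i + 1))) dl)
        (mzv (Fin.append (incLast fun i => v i + 1) (incLast fun i => w i + 1))) := by
    intro v w
    have hs : Summable ((I0 * opL (List.ofFn fun i => w i + 1) *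
        (I0 * opL (List.ofFn fun i => v i + 1))) dl) := 
      I0_summable' (opL_mem (ofFn_pos fun i => Nat.succ_pos _) (I0_mem
        (opL_mem (ofFn_pos fun i => Nat.succ_pos _) dl_mem)))
    rw [mzv_hasSum (a := ∑' m, ((I0 * opL (List.ofFn fun i => w i + 1) *
        (I0 * opL (List.ofFn fun i => v i + 1))) dl) m)]
    · exact hs.hasSum
    · rw [List.ofFn_fin_append, opL_append, opL_incLast (Nat.succ_pos _),
        opL_incLast (Nat.succ_pos _)]
      exact hs.hasSum
  rw [S2, comp_sum a₁ b₁ (fun α => ∑' (β : Comp (a₂ + 1) (a₂ + b₂ + 1)),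
    mzv (Fin.append (incLast α) (incLast β.1)))]
  have h2 := hasSum_sum (s := Finset.Nat.antidiagonalTuple (a₁ + 1) b₁) fun v _ =>
    hasSum_sum (s := Finset.Nat.antidiagonalTuple (a₂ + 1) b₂) fun w _ => h1 v w
  convert h2 using 1
  · rw [s2seq, ← sum_full, ← sum_full]
    ext m
    simp only [Finset.mul_sum, Finset.sum_mul, LinearMap.sum_apply, Finset.sum_apply]
  · apply Finset.sum_congr rfl
    intro u _
    rw [comp_sum a₂ b₂ (fun β => mzv (Fin.append (incLast fun i => u i + 1) (incLast β)))]

theorem s3_hasSum (a₁ b₁ a₂ b₂ a₃ b₃ : ℕ) :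
    HasSum (s3seq a₁ b₁ a₂ b₂ a₃ b₃) (S3 a₁ b₁ a₂ b₂ a₃ b₃) := by
  have h1 : ∀ (u : Fin (a₁ + 1) → ℕ) (v : Fin (a₂ + 1) → ℕ) (w : Fin (a₃ + 1) → ℕ),
      HasSum ((I0 * (opL (List.ofFn (Fin.tail fun i => w i + 1)) * I0 ^ (w 0) * I0) *
        opL (List.ofFn fun i => v i + 1) * opL (List.ofFn fun i => u i + 1)) dl)
        (mzv (incLast (Fin.append (fun i => u i + 1) (Fin.append
      (Function.update (fun i => v i + 1) (Fin.last a₂) ((fun i => v i + 1) (Fin.last a₂) +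
        (fun i => w i + 1) 0)) (Fin.tail (fun i => w i + 1)))))) := by
    intro u v w
    have hs : Summable ((I0 * (opL (List.ofFn (Fin.tail fun i => w i + 1)) * I0 ^ (w 0) * I0) *
        opL (List.ofFn fun i => v i + 1) * opL (List.ofFn fun i => u i + 1)) dl) := 
      I0_summable' (opL_mem (ofFn_pos fun i => Nat.succ_pos _) (I0pow_mem (I0_mem
        (opL_mem (ofFn_pos fun i => Nat.succ_pos _)
        (opL_mem (ofFn_pos fun i => Nat.succ_pos _) dl_mem))) _))
    rw [mzv_hasSum]
    · exact hs.hasSum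
    · rw [opL_incLast (by omega), List.ofFn_fin_append, List.ofFn_fin_append, opL_append,
        opL_append, opL_update, pow_succ]
      simp only [mul_assoc] at hs ⊢
      exact hs.hasSum
  rw [S3, comp_sum a₁ b₁ (fun α => ∑' (β : Comp (a₂ + 1) (a₂ + b₂ + 1))
     (γ : Comp (a₃ + 1) (a₃ + b₃ + 1)), mzv (incLast (Fin.append α (Fin.append
      (Function.update β.1 (Fin.last a₂) (β.1 (Fin.last a₂) + γ.1 0))
      (Fin.tail γ.1)))))]
  have h2 := hasSum_sum (s := Finset.Nat.antidiagonalTuple (a₁ + 1) b₁) fun u _ =>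
    hasSum_sum (s := Finset.Nat.antidiagonalTuple (a₂ + 1) b₂) fun v _ =>
    hasSum_sum (s := Finset.Nat.antidiagonalTuple (a₃ + 1) b₃) fun w _ => h1 u v w
  convert h2 using 1
  · rw [s3seq, ← sum_full, ← sum_full, ← sum_tail]
    ext m
    simp only [Finset.mul_sum, Finset.sum_mul, LinearMap.sum_apply, Finset.sum_apply]
  · apply Finset.sum_congr rfl
    intro u _
    rw [comp_sum a₂ b₂ (fun β => ∑' (γ : Comp (a₃ + 1) (a₃ + b₃ + 1)),
      mzv (incLast (Fin.append (fun i => u i + 1) (Fin.append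
      (Function.update β (Fin.last a₂) (β (Fin.last a₂) + γ.1 0))
      (Fin.tail γ.1)))))]
    apply Finset.sum_congr rfl
    intro v _
    rw [comp_sum a₃ b₃ (fun γ => 
      mzv (incLast (Fin.append (fun i => u i + 1) (Fin.append
      (Function.update (fun i => v i + 1) (Fin.last a₂) ((fun i => v i + 1) (Fin.last a₂) + γ 0))
      (Fin.tail γ)))))]

theorem mzv_single_hasSum (s : ℕ) :
    HasSum (fun n : ℕ => 1 / ((n : ℝ) + 1) ^ (s + 2)) (mzv ![s + 2]) := by
  have hs : Summable (fun n : ℕ => 1 / ((n : ℝ) + 1) ^ (s + 2)) := by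
    have := (summable_nat_add_iff 1).2 (Real.summable_one_div_nat_pow.2 (show 1 < s + 2 by omega))
    simpa using this
  rw [mzv_hasSum _ _ (a := ∑' n : ℕ, 1 / ((n : ℝ) + 1) ^ (s + 2))]
  · exact hs.hasSum
  · have h1 : opL (List.ofFn ![s + 2]) = Jop (s + 2) := by
      rw [List.ofFn_succ, List.ofFn_zero, opL, opL, one_mul]; rfl
    have h2 : (fun n : ℕ => Jop (s + 2) dl (n + 1)) = fun n : ℕ => 1 / ((n : ℝ) + 1) ^ (s + 2) := by
      funext n
      simp [Jop_apply, dl]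
    have h3 := hs.hasSum
    rw [← h2] at h3 ⊢
    rw [h1, ← hasSum_nat_add_iff' 1]
    simpa [Jop_apply (s + 2) dl 0] using h3


/-! ### The sum formula -/

theorem hasSum_of_eq {f g : ℕ → ℝ} {s t : ℝ} (h : HasSum f s) (e : ∀ n, g n = f n) (e2 : t = s) :
    HasSum g t := by
  have : g = f := funext e
  rw [this, e2]; exact h

noncomputable def cfun (x y : ℝ) : ℕ → ℝ
  | 0 => 1 / (1 - y)
  | n + 1 => cfun x y n * ((n + 1 + (x - y)) / (n + 2 - y))

theorem cfun_pos {x y : ℝ} (hy : y < 1) (hz : -1 < x - y) (n : ℕ) : 0 < cfun x y n := by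
  induction n with
  | zero => rw [cfun]; exact div_pos one_pos (by linarith)
  | succ n ih =>
    rw [cfun]
    have : (0 : ℝ) ≤ n := n.cast_nonneg
    exact mul_pos ih (div_pos (by linarith) (by linarith))

theorem cfun_rec {x y : ℝ} (hy : y < 1) (n : ℕ) :
    (n + 1 - y) * cfun x y n = 1 + x * ∑ j ∈ range n, cfun x y j := by
  induction n with
  | zero => simp [cfun]; field_simp [show (1 - y) ≠ 0 by linarith]
  | succ n ih =>
    have h0 : (0 : ℝ) ≤ n := n.cast_nonneg
    have h1 : ((n : ℝ) + 2 - y) ≠ 0 := by linarith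
    rw [Finset.sum_range_succ, mul_add, ← add_assoc, ← ih, cfun]
    push_cast
    rw [show (n : ℝ) + 1 + 1 - y = n + 2 - y by ring]
    field_simp
    ring

theorem cfun_tele {x y : ℝ} (hy : y < 1) (n : ℕ) :
    cfun x y n - cfun x y (n + 1) = (1 - x) * (cfun x y n / (n + 2 - y)) := by
  have h0 : (0 : ℝ) ≤ n := n.cast_nonneg
  have h1 : ((n : ℝ) + 2 - y) ≠ 0 := by linarith
  rw [cfun]
  field_simp
  ring

theorem cfun_shift {x y : ℝ} (hy : y < 1) (n : ℕ) :
    cfun (x - 1) (y - 1) n = (1 - y) * (cfun x y n / (n + 2 - y)) := by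
  induction n with
  | zero =>
    have h1 : (2 - y) ≠ 0 := by linarith
    have h2 : (1 - y) ≠ 0 := by linarith
    have h3 : (1 - (y - 1)) ≠ 0 := by linarith
    simp only [cfun]
    simp
    field_simp
    ring
  | succ n ih =>
    have h0 : (0 : ℝ) ≤ n := n.cast_nonneg
    have h1 : ((n : ℝ) + 2 - y) ≠ 0 := by linarith
    have h2 : ((n : ℝ) + 3 - y) ≠ 0 := by linarith
    rw [cfun, ih, cfun]
    push_cast
    rw [show (n : ℝ) + 2 - (y - 1) = n + 3 - y by ring,
      show (n : ℝ) + 1 + 2 - y = n + 3 - y by ring, show x - 1 - (y - 1) = x - y by ring]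
    field_simp

theorem B_hasSum {x y : ℝ} (hx : x < 1) (hy : y < 1) (hz : -1 < x - y) :
    HasSum (fun n : ℕ => cfun x y n / (n + 2 - y)) (1 / ((1 - x) * (1 - y))) := by
  have hpos : ∀ n : ℕ, 0 < (n : ℝ) + 2 - y := fun n => by
    have h0 : (0 : ℝ) ≤ n := n.cast_nonneg
    linarith
  have hB : ∀ n : ℕ, 0 ≤ cfun x y n / (n + 2 - y) := fun n =>
    div_nonneg (cfun_pos hy hz n).le (hpos n).le
  have hanti : Antitone (cfun x y) := antitone_nat_of_succ_le fun n => by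
    have := cfun_tele (x := x) hy n
    have := mul_nonneg (by linarith : 0 ≤ 1 - x) (hB n)
    linarith
  have hbdd : BddBelow (Set.range (cfun x y)) := ⟨0, by
    rintro _ ⟨n, rfl⟩; exact (cfun_pos hy hz n).le⟩
  have hlim := tendsto_atTop_ciInf hanti hbdd
  set L := ⨅ n, cfun x y n with hL
  have hL0 : 0 ≤ L := le_ciInf fun n => (cfun_pos hy hz n).le
  have hpart : ∀ N, ∑ n ∈ range N, cfun x y n / (n + 2 - y) =
      (cfun x y 0 - cfun x y N) / (1 - x) := by
    intro N
    rw [eq_div_iff (by linarith), mul_comm, Finset.mul_sum, ← Finset.sum_range_sub']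
    exact Finset.sum_congr rfl fun n _ => (cfun_tele hy n).symm
  have hs : HasSum (fun n : ℕ => cfun x y n / (n + 2 - y)) ((cfun x y 0 - L) / (1 - x)) := by
    rw [hasSum_iff_tendsto_nat_of_nonneg hB]
    simp only [hpart]
    exact (tendsto_const_nhds.sub hlim).div_const _
  have : L = 0 := by
    by_contra hne
    have hLp : 0 < L := lt_of_le_of_ne hL0 (Ne.symm hne)
    obtain ⟨M, hM⟩ := exists_nat_gt (2 - y)
    have h2 : Summable (fun n : ℕ => L * (1 / ((n + M : ℕ) : ℝ))) := by
      refine Summable.of_nonneg_of_le (fun n => by positivity) (fun n => ?_) hs.summable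
      rw [mul_one_div]
      have h3 : L ≤ cfun x y n := ciInf_le hbdd n
      have := hpos n
      push_cast
      exact div_le_div₀ (cfun_pos hy hz n).le h3 this (by linarith)
    have h4 : Summable (fun n : ℕ => 1 / ((n + M : ℕ) : ℝ)) := by
      simpa [hne] using h2.mul_left (L⁻¹)
    exact Real.not_summable_one_div_natCast ((summable_nat_add_iff M).1 h4)
  rw [this] at hs
  convert hs using 1
  rw [cfun, sub_zero]
  have h2 : (1 - y) ≠ 0 := by linarith
  have h3 : (1 - x) ≠ 0 := by linarith
  field_simp

theorem T_shift {x y : ℝ} (hy : y < 1) (n : ℕ) :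
    cfun x y n / (n + 1) = cfun (x - 1) (y - 1) n / (n + 1) + cfun x y n / (n + 2 - y) := by
  rw [cfun_shift hy]
  have h0 : (0 : ℝ) ≤ n := n.cast_nonneg
  have h1 : ((n : ℝ) + 2 - y) ≠ 0 := by linarith
  field_simp
  ring

theorem T_shift_le {x y : ℝ} (hy : y < 1) (hz : -1 < x - y) (n : ℕ) :
    cfun (x - 1) (y - 1) n / (n + 1) ≤ (1 - y) * (cfun x y n / (n + 2 - y)) := by
  rw [← cfun_shift hy]
  have h0 : (0 : ℝ) ≤ n := n.cast_nonneg
  exact div_le_self (cfun_pos (by linarith) (by linarith) n).le (by linarith)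

theorem T_summable' {x y : ℝ} (hx : x < 1) (hy : y < 1) (hz : -1 < x - y) :
    Summable (fun n : ℕ => cfun (x - 1) (y - 1) n / (n + 1)) :=
  Summable.of_nonneg_of_le
    (fun n => div_nonneg (cfun_pos (by linarith) (by linarith) n).le (by positivity))
    (T_shift_le hy hz) ((B_hasSum hx hy hz).summable.mul_left _)

theorem T_summable {x y : ℝ} (hx : x < 1) (hy : y < 1) (hz : -1 < x - y) :
    Summable (fun n : ℕ => cfun x y n / (n + 1)) := by
  simp only [T_shift hy]
  exact (T_summable' hx hy hz).add (B_hasSum hx hy hz).summable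

noncomputable def Sxy (x y : ℝ) : ℝ := ∑' n : ℕ, cfun x y n / (n + 1)

theorem Sxy_shift {x y : ℝ} (hx : x < 1) (hy : y < 1) (hz : -1 < x - y) :
    Sxy x y = Sxy (x - 1) (y - 1) + 1 / ((1 - x) * (1 - y)) := by
  rw [Sxy, Sxy, ← (B_hasSum hx hy hz).tsum_eq, ← (T_summable' hx hy hz).tsum_add
    (B_hasSum hx hy hz).summable]
  exact tsum_congr fun n => T_shift hy n

theorem Sxy_shift_le {x y : ℝ} (hx : x < 1) (hy : y < 1) (hz : -1 < x - y) :
    Sxy (x - 1) (y - 1) ≤ 1 / (1 - x) := by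
  have h := (T_summable' hx hy hz).tsum_le_tsum (T_shift_le hy hz)
    ((B_hasSum hx hy hz).summable.mul_left _)
  rw [tsum_mul_left, (B_hasSum hx hy hz).tsum_eq] at h
  refine h.trans (le_of_eq ?_)
  have h2 : (1 - y) ≠ 0 := by linarith
  have h3 : (1 - x) ≠ 0 := by linarith
  field_simp

theorem Sxy_nonneg {x y : ℝ} (hy : y < 1) (hz : -1 < x - y) : 0 ≤ Sxy x y :=
  tsum_nonneg fun n => div_nonneg (cfun_pos hy hz n).le (by positivity)

theorem Sxy_iter {x y : ℝ} (hx : x < 1) (hy : y < 1) (hz : -1 < x - y) (J : ℕ) :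
    Sxy x y = ∑ n ∈ range J, 1 / (((n : ℝ) + 1 - x) * (n + 1 - y)) + Sxy (x - J) (y - J) := by
  induction J with
  | zero => simp
  | succ J ih =>
    have h0 : (0 : ℝ) ≤ J := J.cast_nonneg
    rw [ih, Finset.sum_range_succ, Sxy_shift (x := x - J) (y := y - J) (by linarith) (by linarith)
      (by linarith)]
    push_cast
    rw [show x - (J : ℝ) - 1 = x - (J + 1) by ring, show y - (J : ℝ) - 1 = y - (J + 1) by ring,
      show 1 - (x - (J : ℝ)) = J + 1 - x by ring, show 1 - (y - (J : ℝ)) = J + 1 - y by ring]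
    ring

theorem Sxy_hasSum {x y : ℝ} (hx : x < 1) (hy : y < 1) (hz : -1 < x - y) :
    HasSum (fun n : ℕ => 1 / (((n : ℝ) + 1 - x) * (n + 1 - y))) (Sxy x y) := by
  rw [hasSum_iff_tendsto_nat_of_nonneg]
  · have h1 : ∀ J : ℕ, ∑ n ∈ range J, 1 / (((n : ℝ) + 1 - x) * (n + 1 - y)) =
        Sxy x y - Sxy (x - J) (y - J) := fun J => by rw [Sxy_iter hx hy hz J]; ring
    simp only [h1]
    have h2 : Filter.Tendsto (fun J : ℕ => Sxy (x - J) (y - J)) Filter.atTop (nhds 0) := by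
      rw [← Filter.tendsto_add_atTop_iff_nat 1]
      have h3 : Filter.Tendsto (fun J : ℕ => 1 / ((J : ℝ) + (1 - x))) Filter.atTop (nhds 0) := by
        simp only [one_div]
        exact (Filter.tendsto_atTop_add_const_right _ _ tendsto_natCast_atTop_atTop).inv_tendsto_atTop
      refine squeeze_zero (fun J => ?_) (fun J => ?_) h3
      · have h0 : (0 : ℝ) ≤ J := J.cast_nonneg
        push_cast
        exact Sxy_nonneg (by linarith) (by linarith)
      · have h0 : (0 : ℝ) ≤ J := J.cast_nonneg
        have := Sxy_shift_le (x := x - J) (y := y - J) (by linarith) (by linarith) (by linarith)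
        push_cast
        rw [show (J : ℝ) + (1 - x) = 1 - (x - J) by ring,
          show x - ((J : ℝ) + 1) = x - J - 1 by ring, show y - ((J : ℝ) + 1) = y - J - 1 by ring]
        exact this
    simpa using h2.const_sub (Sxy x y)
  · intro n
    have h0 : (0 : ℝ) ≤ n := n.cast_nonneg
    exact div_nonneg zero_le_one (mul_nonneg (by linarith) (by linarith))

/-! generating function of the coefficients -/

noncomputable def useq (a b : ℕ) : Sq := (Wop a b * I1) dl

theorem eseq_eq (a b m : ℕ) : eseq a b m = useq a b m / m := rfl

theorem useq_zero_zero (m : ℕ) : useq 0 0 (m + 1) = 1 / (m + 1) := by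
  simp [useq, Wop_zero, I1_apply, dl]

theorem useq_zero_succ (b m : ℕ) : useq 0 (b + 1) m = useq 0 b m / m := by
  rw [useq, Wop_zero_succ]; rfl
theorem useq_succ_zero (a m : ℕ) : useq (a + 1) 0 m = (∑ j ∈ range m, useq a 0 j) / m := by
  rw [useq, Wop_succ_zero, mul_assoc, Module.End.mul_apply, I1_apply]; rfl
theorem useq_succ_succ (a b m : ℕ) : useq (a + 1) (b + 1) m =
    ((∑ j ∈ range m, useq a (b + 1) j) + useq (a + 1) b m) / m := by
  rw [useq, Wop_succ_succ, add_mul, mul_assoc, mul_assoc, LinearMap.add_apply,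
    Pi.add_apply, Module.End.mul_apply, I1_apply, add_div]; rfl

theorem useq_nonneg (a b m : ℕ) : 0 ≤ useq a b m := by
  induction a generalizing b m with
  | zero =>
    induction b with
    | zero =>
      rcases m with _ | m
      · simp [useq, Wop_zero, I1_apply]
      · rw [useq_zero_zero]; positivity
    | succ b ih => rw [useq_zero_succ]; positivity
  | succ a iha =>
    induction b with
    | zero => rw [useq_succ_zero]; exact div_nonneg (Finset.sum_nonneg fun j _ => iha _ _) (by positivity)
    | succ b ih =>
      rw [useq_succ_succ]
      exact div_nonneg (add_nonneg (Finset.sum_nonneg fun j _ => iha _ _) ih) (by positivity)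

theorem useq_at_zero (a b : ℕ) : useq a b 0 = 0 := by
  rcases a with _ | a <;> rcases b with _ | b
  · simp [useq, Wop_zero, I1_apply]
  · simp [useq_zero_succ]
  · simp [useq_succ_zero]
  · simp [useq_succ_succ]

theorem geom_aux {y M V : ℝ} (hy : 0 ≤ y) (hM : y < M) {u v : ℕ → ℝ} (hu : ∀ b, 0 ≤ u b)
    (hv : ∀ b, 0 ≤ v b) (h0 : M * u 0 = v 0) (h1 : ∀ b, M * u (b + 1) = v (b + 1) + u b)
    (hV : HasSum (fun b => y ^ b * v b) V) : HasSum (fun b => y ^ b * u b) (V / (M - y)) := by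
  have hM0 : 0 < M := by linarith
  have hMy : 0 < M - y := by linarith
  have hrec : ∀ N, M * ∑ b ∈ range (N + 1), y ^ b * u b =
      ∑ b ∈ range (N + 1), y ^ b * v b + y * ∑ b ∈ range N, y ^ b * u b := by
    intro N
    rw [Finset.sum_range_succ', Finset.sum_range_succ', mul_add, Finset.mul_sum, Finset.mul_sum]
    have : ∀ b, M * (y ^ (b + 1) * u (b + 1)) = y ^ (b + 1) * v (b + 1) + y * (y ^ b * u b) := by
      intro b
      calc _ = y ^ (b + 1) * (M * u (b + 1)) := by ring
        _ = _ := by rw [h1]; ring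
    simp only [this, Finset.sum_add_distrib, pow_zero, one_mul, h0]
    ring
  have hV0 : 0 ≤ V := hV.nonneg fun b => mul_nonneg (pow_nonneg hy _) (hv b)
  have hle : ∀ N, ∑ b ∈ range N, y ^ b * u b ≤ V / (M - y) := by
    intro N
    induction N with
    | zero => simp; positivity
    | succ N ih =>
      have h2 := hrec N
      have h3 : ∑ b ∈ range (N + 1), y ^ b * v b ≤ V :=
        sum_le_hasSum _ (fun b _ => mul_nonneg (pow_nonneg hy _) (hv b)) hV
      have h4 := mul_le_mul_of_nonneg_left ih hy
      have h5 : M * (V / (M - y)) = V + y * (V / (M - y)) := by field_simp; ring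
      refine le_of_mul_le_mul_left ?_ hM0
      linarith
  have hs : Summable (fun b => y ^ b * u b) :=
    summable_of_sum_range_le (fun b => mul_nonneg (pow_nonneg hy _) (hu b)) hle
  have e1 : Filter.Tendsto (fun N => M * ∑ b ∈ range (N + 1), y ^ b * u b) Filter.atTop
      (nhds (M * ∑' b, y ^ b * u b)) :=
    ((Filter.tendsto_add_atTop_iff_nat 1).2 hs.hasSum.tendsto_sum_nat).const_mul M
  have e2 : Filter.Tendsto (fun N => M * ∑ b ∈ range (N + 1), y ^ b * u b) Filter.atTop
      (nhds (V + y * ∑' b, y ^ b * u b)) := by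
    simp only [hrec]
    exact ((Filter.tendsto_add_atTop_iff_nat 1).2 hV.tendsto_sum_nat).add
      (hs.hasSum.tendsto_sum_nat.const_mul y)
  have e3 := tendsto_nhds_unique e1 e2
  have : V / (M - y) = ∑' b, y ^ b * u b := by
    rw [div_eq_iff hMy.ne']; linarith
  rw [this]
  exact hs.hasSum

noncomputable def Gf (y : ℝ) : ℕ → ℕ → ℝ
  | 0, m => if m = 0 then 0 else 1 / (m - y)
  | a + 1, m => if m = 0 then 0 else (∑ j ∈ range m, Gf y a j) / (m - y)

theorem Gf_hasSum {y : ℝ} (hy : 0 ≤ y) (hy1 : y < 1) (a m : ℕ) :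
    HasSum (fun b => y ^ b * useq a b m) (Gf y a m) := by
  induction a generalizing m with
  | zero =>
    rcases m with _ | m
    · simp only [useq_at_zero, Gf]; simp
    rw [Gf, if_neg (Nat.succ_ne_zero m)]
    have h0 : (0 : ℝ) ≤ m := m.cast_nonneg
    refine geom_aux (v := fun b => if b = 0 then 1 else 0) hy (by push_cast; linarith)
      (fun b => useq_nonneg _ _ _) (fun b => by split_ifs <;> norm_num) ?_ ?_ ?_
    · rw [useq_zero_zero]; simp; field_simp
    · intro b; rw [useq_zero_succ]; simp; field_simp
    · convert hasSum_ite_eq (0 : ℕ) (1 : ℝ) using 2 with b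
      by_cases hb : b = 0 <;> simp [hb]
  | succ a ih =>
    rcases m with _ | m
    · simp only [useq_at_zero, Gf]; simp
    rw [Gf, if_neg (Nat.succ_ne_zero m)]
    have h0 : (0 : ℝ) ≤ m := m.cast_nonneg
    refine geom_aux (v := fun b => ∑ j ∈ range (m + 1), useq a b j) hy (by push_cast; linarith)
      (fun b => useq_nonneg _ _ _) (fun b => Finset.sum_nonneg fun j _ => useq_nonneg _ _ _) ?_ ?_ ?_
    · rw [useq_succ_zero]; field_simp
    · intro b; rw [useq_succ_succ]; field_simp
    · simp only [Finset.mul_sum]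
      exact hasSum_sum fun j _ => ih j

noncomputable def dfun (x y : ℝ) : ℕ → ℝ
  | 0 => 0
  | n + 1 => cfun x y n

theorem dfun_hasSum {x y : ℝ} (hy1 : y < 1) (m : ℕ) :
    HasSum (fun a => x ^ a * Gf y a m) (dfun x y m) := by
  induction m using Nat.strong_induction_on with
  | _ m ih =>
  rcases m with _ | m
  · have : ∀ a, Gf y a 0 = 0 := by intro a; cases a <;> simp [Gf]
    simp only [this, dfun]; simp
  have h0 : (0 : ℝ) ≤ m := m.cast_nonneg
  have hne : (m : ℝ) + 1 - y ≠ 0 := by linarith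
  rw [← hasSum_nat_add_iff' 1]
  have h1 : HasSum (fun a => ∑ j ∈ range (m + 1), x ^ a * Gf y a j)
      (∑ j ∈ range (m + 1), dfun x y j) := hasSum_sum fun j hj => ih j (Finset.mem_range.1 hj)
  have h2 := h1.mul_left (x / (m + 1 - y))
  refine hasSum_of_eq h2 (fun a => ?_) ?_
  · rw [Gf, if_neg (Nat.succ_ne_zero m), ← Finset.mul_sum]
    push_cast
    field_simp
    ring
  · rw [Finset.sum_range_succ' (dfun x y)]
    simp only [dfun, Finset.range_one, Finset.sum_singleton, pow_zero, one_mul, add_zero]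
    rw [Gf, if_neg (Nat.succ_ne_zero m)]
    have := cfun_rec (x := x) hy1 m
    push_cast
    field_simp
    linarith

/-! uniqueness of coefficients -/

open scoped ENNReal

theorem enn_split (r : ℕ → ℝ≥0∞) (k : ℕ) :
    ∑' i, r i = ∑ i ∈ range k, r i + ∑' i, r (i + k) :=
  (Summable.sum_add_tsum_nat_add' (f := r) (k := k) ENNReal.summable).symm

theorem coeff_tail_ne_top {q : ℕ → ℝ≥0∞} (n : ℕ) {τ : ℝ≥0∞} (h0 : τ ≠ 0)
    (hq : ∑' i, q i * τ ^ i ≠ ⊤) : ∑' i, q (i + n) * τ ^ i ≠ ⊤ := by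
  intro hM
  apply hq
  have h1 : (∑' i, q (i + n) * τ ^ i) * τ ^ n ≤ ∑' i, q i * τ ^ i := by
    rw [enn_split (fun i => q i * τ ^ i) n, ← ENNReal.tsum_mul_right]
    refine le_trans (le_of_eq (tsum_congr fun i => ?_)) le_add_self
    rw [mul_assoc, ← pow_add]
  rw [hM, ENNReal.top_mul (pow_ne_zero _ h0)] at h1
  exact top_le_iff.1 h1

theorem coeff_key {p q : ℕ → ℝ≥0∞} (n : ℕ) {τ ρ : ℝ≥0∞} (h0 : τ ≠ 0) (htop : τ ≠ ⊤) (hρ : τ ≤ ρ)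
    (h : ∑' i, p i * τ ^ i = ∑' i, q i * τ ^ i) (hq : ∑' i, q i * τ ^ i ≠ ⊤)
    (hpq : ∀ i < n, p i = q i) : p n ≤ q n + τ * ∑' i, q (i + (n + 1)) * ρ ^ i := by
  have hsum : ∑ i ∈ range n, p i * τ ^ i = ∑ i ∈ range n, q i * τ ^ i :=
    Finset.sum_congr rfl fun i hi => by rw [hpq i (Finset.mem_range.1 hi)]
  rw [enn_split (fun i => p i * τ ^ i) n, enn_split (fun i => q i * τ ^ i) n, hsum] at h
  rw [enn_split (fun i => q i * τ ^ i) n] at hq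
  have e2 := (ENNReal.add_right_inj (ENNReal.add_ne_top.1 hq).1).1 h
  have ht0 : τ ^ n ≠ 0 := pow_ne_zero _ h0
  have htt : τ ^ n ≠ ⊤ := ENNReal.pow_ne_top htop
  rw [← ENNReal.mul_le_mul_iff_left ht0 htt]
  have s1 : p n * τ ^ n ≤ ∑' i, p (i + n) * τ ^ (i + n) := by
    have := ENNReal.le_tsum (f := fun i => p (i + n) * τ ^ (i + n)) 0
    simpa only [zero_add] using this
  have s2 : ∑' i, q (i + n) * τ ^ (i + n) =
      q n * τ ^ n + ∑' i, q (i + 1 + n) * τ ^ (i + 1 + n) := by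
    have := enn_split (fun i => q (i + n) * τ ^ (i + n)) 1
    simpa only [Finset.sum_range_one, zero_add] using this
  have s3 : ∑' i, q (i + 1 + n) * τ ^ (i + 1 + n) ≤
      τ * (∑' i, q (i + (n + 1)) * ρ ^ i) * τ ^ n := by
    rw [← ENNReal.tsum_mul_left, ← ENNReal.tsum_mul_right]
    refine ENNReal.tsum_le_tsum fun i => ?_
    rw [show i + 1 + n = i + (n + 1) by ring]
    calc q (i + (n + 1)) * τ ^ (i + (n + 1)) = τ * (q (i + (n + 1)) * τ ^ i) * τ ^ n := by ring
      _ ≤ τ * (q (i + (n + 1)) * ρ ^ i) * τ ^ n := by gcongr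
  rw [add_mul]
  refine s1.trans ?_
  rw [e2, s2]
  exact add_le_add le_rfl s3

theorem coeff_le_aux {p q : ℕ → ℝ≥0∞} (n : ℕ)
    (h : ∀ t : ℝ, 0 < t → t < 1 →
      ∑' i, p i * ENNReal.ofReal t ^ i = ∑' i, q i * ENNReal.ofReal t ^ i)
    (hq : ∀ t : ℝ, 0 < t → t < 1 → ∑' i, q i * ENNReal.ofReal t ^ i ≠ ⊤)
    (hpq : ∀ i < n, p i = q i) : p n ≤ q n := by
  have hMtop := coeff_tail_ne_top (n + 1) (by simp : ENNReal.ofReal (1 / 2) ≠ 0)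
    (hq (1 / 2) (by norm_num) (by norm_num))
  have key : ∀ t : ℝ, 0 < t → t ≤ 1 / 2 →
      p n ≤ q n + ENNReal.ofReal t * ∑' i, q (i + (n + 1)) * ENNReal.ofReal (1 / 2) ^ i := by
    intro t ht ht2
    exact coeff_key n (by simpa using ht) ENNReal.ofReal_ne_top (ENNReal.ofReal_le_ofReal ht2)
      (h t ht (by linarith)) (hq t ht (by linarith)) hpq
  generalize (∑' i, q (i + (n + 1)) * ENNReal.ofReal (1 / 2) ^ i) = M at hMtop key
  have hlim : Filter.Tendsto (fun k : ℕ => q n + ENNReal.ofReal (1 / ((k : ℝ) + 2)) * M)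
      Filter.atTop (nhds (q n + ENNReal.ofReal 0 * M)) := by
    refine tendsto_const_nhds.add (ENNReal.Tendsto.mul_const ?_ (Or.inr hMtop))
    refine ENNReal.tendsto_ofReal ?_
    simp only [one_div]
    exact (Filter.tendsto_atTop_add_const_right _ _ tendsto_natCast_atTop_atTop).inv_tendsto_atTop
  have := ge_of_tendsto' hlim fun k => key (1 / ((k : ℝ) + 2)) (by positivity) (by
    have h0 : (0 : ℝ) ≤ k := k.cast_nonneg
    apply one_div_le_one_div_of_le <;> linarith)
  simpa using this

theorem coeff_unique {p q : ℕ → ℝ≥0∞}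
    (h : ∀ t : ℝ, 0 < t → t < 1 →
      ∑' i, p i * ENNReal.ofReal t ^ i = ∑' i, q i * ENNReal.ofReal t ^ i)
    (hq : ∀ t : ℝ, 0 < t → t < 1 → ∑' i, q i * ENNReal.ofReal t ^ i ≠ ⊤) (n : ℕ) : p n = q n := by
  induction n using Nat.strong_induction_on with
  | _ n ih =>
  apply le_antisymm
  · exact coeff_le_aux n h hq ih
  · exact coeff_le_aux n (fun t h0 h1 => (h t h0 h1).symm)
      (fun t h0 h1 => by rw [h t h0 h1]; exact hq t h0 h1) fun i hi => (ih i hi).symm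

theorem ofReal_hasSum {f : ℕ → ℝ} {s : ℝ} (hf : ∀ n, 0 ≤ f n) (h : HasSum f s) :
    ∑' n, ENNReal.ofReal (f n) = ENNReal.ofReal s := by
  rw [← h.tsum_eq, ENNReal.ofReal_tsum_of_nonneg hf h.summable]

theorem gen_eq {f : ℕ → ℕ → ℕ → ℝ} {E : ℕ → ℕ → ℝ} {x y s : ℝ} {g : ℕ → ℕ → ℝ} {d : ℕ → ℝ}
    (hx : 0 ≤ x) (hy : 0 ≤ y)
    (hf : ∀ a b m, 0 ≤ f a b m) (hE : ∀ a b, HasSum (f a b) (E a b))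
    (hg : ∀ a m, HasSum (fun b => y ^ b * f a b m) (g a m))
    (hd : ∀ m, HasSum (fun a => x ^ a * g a m) (d m)) (hs : HasSum d s) :
    ∑' a, (∑' b, ENNReal.ofReal (E a b) * ENNReal.ofReal y ^ b) * ENNReal.ofReal x ^ a =
      ENNReal.ofReal s := by
  have hg0 : ∀ a m, 0 ≤ g a m := fun a m =>
    (hg a m).nonneg fun b => mul_nonneg (pow_nonneg hy _) (hf _ _ _)
  have hd0 : ∀ m, 0 ≤ d m := fun m =>
    (hd m).nonneg fun b => mul_nonneg (pow_nonneg hx _) (hg0 _ _)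
  have h1 : ∀ a, ∑' b, ENNReal.ofReal (E a b) * ENNReal.ofReal y ^ b =
      ∑' m, ENNReal.ofReal (g a m) := by
    intro a
    have : ∀ b, ENNReal.ofReal (E a b) * ENNReal.ofReal y ^ b =
        ∑' m, ENNReal.ofReal (y ^ b * f a b m) := by
      intro b
      rw [ofReal_hasSum (fun m => mul_nonneg (pow_nonneg hy _) (hf _ _ _))
        ((hE a b).mul_left (y ^ b)), ENNReal.ofReal_mul (pow_nonneg hy _), mul_comm,
        ENNReal.ofReal_pow hy]
    simp only [this]
    rw [ENNReal.tsum_comm]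
    exact tsum_congr fun m =>
      ofReal_hasSum (fun b => mul_nonneg (pow_nonneg hy _) (hf _ _ _)) (hg a m)
  have h2 : ∀ a, (∑' m, ENNReal.ofReal (g a m)) * ENNReal.ofReal x ^ a =
      ∑' m, ENNReal.ofReal (x ^ a * g a m) := by
    intro a
    rw [← ENNReal.tsum_mul_right]
    refine tsum_congr fun m => ?_
    rw [ENNReal.ofReal_mul (pow_nonneg hx _), mul_comm, ENNReal.ofReal_pow hx]
  simp only [h1, h2]
  rw [ENNReal.tsum_comm, ← ofReal_hasSum hd0 hs]
  exact tsum_congr fun m =>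
    ofReal_hasSum (fun b => mul_nonneg (pow_nonneg hx _) (hg0 _ _)) (hd m)

theorem eseq_summable (a b : ℕ) : Summable (eseq a b) :=
  I0_summable' (Wop_mem a b (I1_mem dl_mem))

theorem eseq_nonneg (a b m : ℕ) : 0 ≤ eseq a b m := by
  rw [eseq_eq]; exact div_nonneg (useq_nonneg _ _ _) (by positivity)

theorem gen_e {x y : ℝ} (hx : 0 ≤ x) (hx1 : x < 1) (hy : 0 ≤ y) (hy1 : y < 1) :
    ∑' a, (∑' b, ENNReal.ofReal (∑' m, eseq a b m) * ENNReal.ofReal y ^ b) *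
      ENNReal.ofReal x ^ a = ENNReal.ofReal (Sxy x y) := by
  refine gen_eq (f := eseq) (g := fun a m => Gf y a m / m) (d := fun m => dfun x y m / m)
    hx hy eseq_nonneg (fun a b => (eseq_summable a b).hasSum) ?_ ?_ ?_
  · intro a m
    simp only [eseq_eq, ← mul_div_assoc]
    exact (Gf_hasSum hy hy1 a m).div_const _
  · intro m
    simp only [← mul_div_assoc]
    exact (dfun_hasSum hy1 m).div_const _
  · rw [← hasSum_nat_add_iff' 1]
    have := (T_summable hx1 hy1 (by linarith)).hasSum
    simpa [dfun, Sxy] using this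

theorem geom_shift {x N : ℝ} (hx : 0 ≤ x) (hN : x < N) :
    HasSum (fun a : ℕ => x ^ a * (1 / N ^ (a + 1))) (1 / (N - x)) := by
  have h := (hasSum_geometric_of_lt_one (r := x / N) (div_nonneg hx (by linarith))
    ((div_lt_one (by linarith)).2 hN)).mul_left (1 / N)
  have hN0 : N ≠ 0 := by linarith
  have hN1 : N - x ≠ 0 := by linarith
  refine hasSum_of_eq h (fun a => ?_) ?_
  · rw [div_pow, pow_succ]; field_simp
  · rw [one_sub_div hN0]; field_simp

theorem gen_z {x y : ℝ} (hx : 0 ≤ x) (hx1 : x < 1) (hy : 0 ≤ y) (hy1 : y < 1) :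
    ∑' a, (∑' b, ENNReal.ofReal (mzv ![a + b + 2]) * ENNReal.ofReal y ^ b) *
      ENNReal.ofReal x ^ a = ENNReal.ofReal (Sxy x y) := by
  refine gen_eq (f := fun a b n => 1 / ((n : ℝ) + 1) ^ (a + b + 2)) 
    (E := fun a b => mzv ![a + b + 2])
    (g := fun a n => 1 / ((n : ℝ) + 1) ^ (a + 1) * (1 / (n + 1 - y)))
    (d := fun n : ℕ => 1 / (((n : ℝ) + 1 - x) * (n + 1 - y)))
    hx hy (fun a b m => by positivity) (fun a b => mzv_single_hasSum (a + b)) ?_ ?_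
    (Sxy_hasSum hx1 hy1 (by linarith))
  · intro a n
    have h0 : (0 : ℝ) ≤ n := n.cast_nonneg
    have := (geom_shift (N := n + 1) hy (by linarith)).mul_left (1 / ((n : ℝ) + 1) ^ (a + 1))
    refine hasSum_of_eq this (fun b => ?_) rfl
    rw [show a + b + 2 = (a + 1) + (b + 1) by ring, pow_add]
    field_simp
  · intro n
    have h0 : (0 : ℝ) ≤ n := n.cast_nonneg
    have := (geom_shift (N := n + 1) hx (by linarith)).mul_right (1 / ((n : ℝ) + 1 - y))
    refine hasSum_of_eq this (fun a => ?_) ?_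
    · ring
    · rw [one_div_mul_one_div]

theorem mzv_nonneg {n : ℕ} (α : Fin n → ℕ) : 0 ≤ mzv α :=
  tsum_nonneg fun f => Finset.prod_nonneg fun i _ => by positivity

theorem eseq_hasSum (a b : ℕ) : HasSum (eseq a b) (mzv ![a + b + 2]) := by
  have h1 : ∀ y : ℝ, 0 < y → y < 1 → ∀ a,
      ∑' b, ENNReal.ofReal (∑' m, eseq a b m) * ENNReal.ofReal y ^ b =
      ∑' b, ENNReal.ofReal (mzv ![a + b + 2]) * ENNReal.ofReal y ^ b := by
    intro y hy hy1
    refine coeff_unique (fun t h0 h1 => ?_) (fun t h0 h1 => ?_)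
    · rw [gen_e h0.le h1 hy.le hy1, gen_z h0.le h1 hy.le hy1]
    · rw [gen_z h0.le h1 hy.le hy1]; exact ENNReal.ofReal_ne_top
  have h2 := coeff_unique (fun y h0 h1' => h1 y h0 h1' a) (fun y h0 h1' htop => by
    have h3 := gen_z (x := 1 / 2) (by norm_num) (by norm_num) h0.le h1'
    have h4 := ENNReal.le_tsum (f := fun a => 
      (∑' b, ENNReal.ofReal (mzv ![a + b + 2]) * ENNReal.ofReal y ^ b) *
      ENNReal.ofReal (1 / 2) ^ a) a
    rw [h3] at h4
    simp only [htop] at h4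
    rw [ENNReal.top_mul (by positivity)] at h4
    exact ENNReal.ofReal_ne_top (top_le_iff.1 h4)) b
  rw [ENNReal.ofReal_eq_ofReal_iff (tsum_nonneg (eseq_nonneg a b)) (mzv_nonneg _)] at h2
  rw [← h2]
  exact (eseq_summable a b).hasSum


/-! ### Conclusion -/

theorem coeff_prod (μ ξ μ' ξ' : ℝ) (k l m : ℕ) :
    PowerSeries.coeff k (PowerSeries.coeff l (PowerSeries.coeff m
      (Psi (Eg μ ξ) * Psi (Eg μ' ξ')))) =
    ∑ a ∈ antidiagonal k, ∑ b ∈ antidiagonal l,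
      μ ^ a.1 * μ' ^ a.2 * ξ ^ b.1 * ξ' ^ b.2 *
        ∑ p ∈ antidiagonal m, eseq a.1 b.1 p.1 * eseq a.2 b.2 p.2 := by
  rw [PowerSeries.coeff_mul, map_sum, map_sum]
  simp only [PowerSeries.coeff_mul, map_sum, coeff_Eg, Finset.mul_sum]
  rw [Finset.sum_comm' (t' := antidiagonal l) (s' := fun _ => antidiagonal m) (by simp [and_comm])]
  rw [Finset.sum_congr rfl fun b _ => Finset.sum_comm, Finset.sum_comm]
  refine Finset.sum_congr rfl fun a _ => Finset.sum_congr rfl fun b _ =>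
    Finset.sum_congr rfl fun p _ => by ring

theorem prod_hasSum (a b a' b' : ℕ) :
    HasSum (fun m => ∑ p ∈ antidiagonal m, eseq a b p.1 * eseq a' b' p.2)
      (mzv ![a + b + 2] * mzv ![a' + b' + 2]) := by
  have h1 : Summable fun m => ‖eseq a b m‖ := (eseq_summable a b).norm
  have h2 : Summable fun m => ‖eseq a' b' m‖ := (eseq_summable a' b').norm
  rw [← (eseq_hasSum a b).tsum_eq, ← (eseq_hasSum a' b').tsum_eq,
    tsum_mul_tsum_eq_tsum_sum_antidiagonal_of_summable_norm h1 h2]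
  exact (summable_norm_sum_mul_antidiagonal_of_summable_norm h1 h2).of_norm.hasSum

theorem P2_hasSum (μ ξ μ' ξ' : ℝ) (k l : ℕ) :
    HasSum (fun m => PowerSeries.coeff k (PowerSeries.coeff l (PowerSeries.coeff m
      (Psi (P2 μ ξ μ' ξ')))))
    (∑ a ∈ antidiagonal k, ∑ b ∈ antidiagonal l,
      μ' ^ a.1 * μ ^ a.2 * ξ' ^ b.1 * ξ ^ b.2 * S2 a.1 b.1 a.2 b.2) := by
  simp only [coeff_P2]
  exact hasSum_sum fun a _ => hasSum_sum fun b _ => (s2_hasSum _ _ _ _).mul_left _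

theorem P3_hasSum (μ ξ μ' ξ' μ'' ξ'' : ℝ) (k l : ℕ) :
    HasSum (fun m => PowerSeries.coeff k (PowerSeries.coeff l (PowerSeries.coeff m
      (Psi (P3 μ ξ μ' ξ' μ'' ξ'')))))
    (∑ a ∈ antidiagonal k, ∑ a' ∈ antidiagonal a.2,
        ∑ b ∈ antidiagonal l, ∑ b' ∈ antidiagonal b.2,
          μ'' ^ a.1 * ξ'' ^ b.1 * μ' ^ a'.1 * ξ' ^ b'.1 * (μ ^ a'.2 * ξ ^ b'.2) *
            S3 a.1 b.1 a'.1 b'.1 a'.2 b'.2) := by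
  simp only [coeff_P3]
  exact hasSum_sum fun a _ => hasSum_sum fun a' _ => hasSum_sum fun b _ => hasSum_sum fun b' _ =>
    (s3_hasSum _ _ _ _ _ _).mul_left _

theorem two_factor_aux (k l : ℕ) (μ ξ μ' ξ' : ℝ) :
    (∑ a ∈ antidiagonal k, ∑ b ∈ antidiagonal l,
      μ ^ a.1 * μ' ^ a.2 * ξ ^ b.1 * ξ' ^ b.2 * (mzv ![a.1 + b.1 + 2] * mzv ![a.2 + b.2 + 2])) =
    (∑ a ∈ antidiagonal k, ∑ b ∈ antidiagonal l,
        μ' ^ a.1 * μ ^ a.2 * ξ' ^ b.1 * ξ ^ b.2 * S2 a.1 b.1 a.2 b.2) +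
      (∑ a ∈ antidiagonal k, ∑ a' ∈ antidiagonal a.2,
        ∑ b ∈ antidiagonal l, ∑ b' ∈ antidiagonal b.2,
          μ ^ a.1 * ξ ^ b.1 * (μ + μ') ^ a'.1 * (ξ + ξ') ^ b'.1 * (μ ^ a'.2 * ξ ^ b'.2) *
            S3 a.1 b.1 a'.1 b'.1 a'.2 b'.2) +
      (∑ a ∈ antidiagonal k, ∑ a' ∈ antidiagonal a.2,
        ∑ b ∈ antidiagonal l, ∑ b' ∈ antidiagonal b.2,
          μ' ^ a.1 * ξ' ^ b.1 * (μ + μ') ^ a'.1 * (ξ + ξ') ^ b'.1 * (μ ^ a'.2 * ξ ^ b'.2) *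
            S3 a.1 b.1 a'.1 b'.1 a'.2 b'.2) +
    ((∑ a ∈ antidiagonal k, ∑ b ∈ antidiagonal l,
        μ ^ a.1 * μ' ^ a.2 * ξ ^ b.1 * ξ' ^ b.2 * S2 a.1 b.1 a.2 b.2) +
      (∑ a ∈ antidiagonal k, ∑ a' ∈ antidiagonal a.2,
        ∑ b ∈ antidiagonal l, ∑ b' ∈ antidiagonal b.2,
          μ' ^ a.1 * ξ' ^ b.1 * (μ + μ') ^ a'.1 * (ξ + ξ') ^ b'.1 * (μ' ^ a'.2 * ξ' ^ b'.2) *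
            S3 a.1 b.1 a'.1 b'.1 a'.2 b'.2) +
      (∑ a ∈ antidiagonal k, ∑ a' ∈ antidiagonal a.2,
        ∑ b ∈ antidiagonal l, ∑ b' ∈ antidiagonal b.2,
          μ ^ a.1 * ξ ^ b.1 * (μ + μ') ^ a'.1 * (ξ + ξ') ^ b'.1 * (μ' ^ a'.2 * ξ' ^ b'.2) *
            S3 a.1 b.1 a'.1 b'.1 a'.2 b'.2)) := by
  have hL : HasSum (fun m => PowerSeries.coeff k (PowerSeries.coeff l (PowerSeries.coeff m
      (Psi (Eg μ ξ) * Psi (Eg μ' ξ')))))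
      (∑ a ∈ antidiagonal k, ∑ b ∈ antidiagonal l,
      μ ^ a.1 * μ' ^ a.2 * ξ ^ b.1 * ξ' ^ b.2 *
        (mzv ![a.1 + b.1 + 2] * mzv ![a.2 + b.2 + 2])) := by
    simp only [coeff_prod]
    exact hasSum_sum fun a _ => hasSum_sum fun b _ => (prod_hasSum _ _ _ _).mul_left _
  refine hL.unique ?_
  rw [EE]
  simp only [Psi_add, map_add]
  exact ((P2_hasSum μ ξ μ' ξ' k l).add (P3_hasSum _ _ _ _ _ _ k l)).add
    (P3_hasSum _ _ _ _ _ _ k l) |>.add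
    (((P2_hasSum μ' ξ' μ ξ k l).add (P3_hasSum _ _ _ _ _ _ k l)).add (P3_hasSum _ _ _ _ _ _ k l))

theorem weighted_sum_formula_two_factors (k ℓ : ℕ) (μ ξ : Fin 2 → ℝ) :
    (∑ a ∈ antidiagonal k, ∑ b ∈ antidiagonal ℓ,
      μ 0 ^ a.1 * μ 1 ^ a.2 * ξ 0 ^ b.1 * ξ 1 ^ b.2 *
        (mzv ![a.1 + b.1 + 2] * mzv ![a.2 + b.2 + 2])) =
    ∑ σ : Equiv.Perm (Fin 2),
      ((∑ a ∈ antidiagonal k, ∑ b ∈ antidiagonal ℓ,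
        μ (σ 0) ^ a.1 * μ (σ 1) ^ a.2 * ξ (σ 0) ^ b.1 * ξ (σ 1) ^ b.2 *
          S2 a.1 b.1 a.2 b.2) +
      ∑ a ∈ antidiagonal k, ∑ a' ∈ antidiagonal a.2,
        ∑ b ∈ antidiagonal ℓ, ∑ b' ∈ antidiagonal b.2,
          μ (σ 0) ^ a.1 * ξ (σ 0) ^ b.1 *
            (μ (σ 0) + μ (σ 1)) ^ a'.1 * (ξ (σ 0) + ξ (σ 1)) ^ b'.1 *
            (μ (σ 0) ^ a'.2 * ξ (σ 0) ^ b'.2 + μ (σ 1) ^ a'.2 * ξ (σ 1) ^ b'.2) *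
            S3 a.1 b.1 a'.1 b'.1 a'.2 b'.2) := by
  have hu : (Finset.univ : Finset (Equiv.Perm (Fin 2))) = {1, Equiv.swap 0 1} := by decide
  have hne : (1 : Equiv.Perm (Fin 2)) ≠ Equiv.swap 0 1 := by decide
  rw [hu, Finset.sum_pair hne, two_factor_aux]
  simp only [Equiv.Perm.coe_one, id_eq, Equiv.swap_apply_left, Equiv.swap_apply_right,
    mul_add, add_mul, Finset.sum_add_distrib, add_comm (μ 1) (μ 0), add_comm (ξ 1) (ξ 0)]
  ring
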